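/- Let N ≥ 2, let B ⊆ ℝ^N be an open ball, and let Γ be a nonempty relatively open subset of the boundary sphere ∂B. Let p, q > 0 with pq > 1, and let u, v : ℝ^N → ℝ be twice continuously differentiable on the closed ball cl(B) and suppose there is a constant C > 0 with |Δu(x)| ≤ C·|v(x)|^q and |Δv(x)| ≤ C·|u(x)|^p for all x ∈ cl(B). If u = 0, v = 0 on Γ and the total derivatives Du and Dv vanish at every point of Γ, then u ≡ 0 and v ≡ 0 on cl(B). -/

import Mathlib

/-!
The proof rests on a sup-norm Carleman-type estimate, `ucp_carleman`: if `ΔW = f` with `W` and `f` supported in the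
annulus `1 ≤ ‖y‖ ≤ 2` and `|f| ≤ T ‖y‖ ^ m`, then `|W| ≤ A m ^ (N + 1) T ‖x‖ ^ m` with `A` independent of `m`. It
is obtained by representing `W` with the fundamental solution minus its Taylor polynomial of degree `m` in `x`. The
subtracted terms are harmonic in `y ≠ 0`, and the difference gains the factor `(‖x‖ / ‖y‖) ^ m` with only a
polynomial loss in `m` (`ucp_kernel`); the Taylor coefficients are bounded by Cauchy estimates for a holomorphic
extension in the scaling variable (`ucpG_bound`).

Suppose `u` and `v` vanish inside a unit ball and are small near it. The exponents satisfy `p q > 1`, so there are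
positive integers `i, j` with `j < i p` and `i < j q`. For `g = max (|u| ^ (1/i)) (|v| ^ (1/j))` the estimate, applied
to cut-off versions of `u` with weight exponent `n i` and of `v` with `n j`, turns bounds `g ≤ ε`, `g ≤ Z ‖y‖ ^ n` on
`‖y‖ < r` into `g ≤ B n ^ K max (ε ^ δ Z) (r⁻¹ ^ n) ‖y‖ ^ n` with `δ > 0`. Since the surplus factor `ε ^ δ` beats the
polynomial loss for small `ε`, the `Z`-term can be absorbed, and on a slightly smaller ball `g` is exponentially
small in `n`. This allows a larger `n`; iterating with radii decreasing to `9 / 8` gives `g = 0` for `‖y‖ < 9 / 8`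
(`ucp_iteration`, `ucp_local`). No differentiability or Lipschitz property of the nonlinearity is used, so that one
of `p, q` may be less than one.

By scaling, zeros spread across any point where the zero set contains a tangent ball (`ucp_touch`). Vanishing Cauchy
data make the extension by zero across the sphere a weak solution (`ucp_green`), so at a point of `Γ` the exterior
tangent ball can be used and `u, v` vanish near that point. Inside the ball, touching balls show that the interior of
the common zero set is relatively closed, and connectedness finishes the proof.
-/

open MeasureTheory Asymptotics Filter Metric Set

noncomputable def laplacian {N : ℕ} (u : EuclideanSpace ℝ (Fin N) → ℝ)
    (x : EuclideanSpace ℝ (Fin N)) : ℝ :=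
  ∑ i : Fin N, iteratedFDeriv ℝ 2 u x ![EuclideanSpace.single i 1, EuclideanSpace.single i 1]

noncomputable def laplacianWithin {N : ℕ} (u : EuclideanSpace ℝ (Fin N) → ℝ)
    (s : Set (EuclideanSpace ℝ (Fin N))) (x : EuclideanSpace ℝ (Fin N)) : ℝ :=
  ∑ i : Fin N, iteratedFDerivWithin ℝ 2 u s x ![EuclideanSpace.single i 1, EuclideanSpace.single i 1]

def VanishesInfOrder {N : ℕ} (w : EuclideanSpace ℝ (Fin N) → ℝ)
    (x₀ : EuclideanSpace ℝ (Fin N)) : Prop :=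
  ∃ ε > (0:ℝ), ∀ m > (0:ℝ),
    (fun r : ℝ => ∫ x in ball x₀ r, |w x| ^ ε) =o[nhdsWithin 0 (Ioi 0)] fun r : ℝ => r ^ m

noncomputable def spow (t s : ℝ) : ℝ := Real.sign t * |t| ^ s

noncomputable def distToInt (x : ℝ) : ℝ := min (Int.fract x) (1 - Int.fract x)

def IsRadial {N : ℕ} (u : EuclideanSpace ℝ (Fin N) → ℝ) : Prop :=
  ∃ U : ℝ → ℝ, ∀ x, u x = U ‖x‖

open scoped ContDiff Topology

/-! ### Radial profile of the fundamental solution -/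

/-- The radial profile `F(s) = ∫_s^20 t^(-N/2) dt`. Up to a constant factor and an additive constant,
`y ↦ F(‖y - x‖²)` is the fundamental solution of the Laplacian with pole `x`, in every dimension. The upper
limit makes `F` nonnegative at `s = ‖y - x‖² + μ` whenever `‖y - x‖ ≤ 4` and `μ ≤ 1`. -/
noncomputable def ucpF (N : ℕ) (s : ℝ) : ℝ := ∫ t in s..20, t ^ (-(N : ℝ) / 2)

theorem ucp_intervalIntegrable {r a b : ℝ} (ha : 0 < a) (hb : 0 < b) :
    IntervalIntegrable (fun t : ℝ => t ^ r) volume a b := by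
  apply intervalIntegral.intervalIntegrable_rpow
  right
  intro h
  rw [mem_uIcc] at h
  rcases h with h | h <;> linarith [h.1, h.2]

theorem ucpF_hasDerivAt (N : ℕ) {s : ℝ} (hs : 0 < s) :
    HasDerivAt (ucpF N) (-(s ^ (-(N : ℝ) / 2))) s := by
  have hc : ContinuousOn (fun t : ℝ => t ^ (-(N : ℝ) / 2)) (Ioi 0) := fun t ht =>
    (Real.continuousAt_rpow_const _ _ (Or.inl (ne_of_gt ht))).continuousWithinAt
  refine intervalIntegral.integral_hasDerivAt_left (ucp_intervalIntegrable hs (by norm_num)) ?_ ?_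
  · exact hc.stronglyMeasurableAtFilter isOpen_Ioi s hs
  · exact hc.continuousAt (Ioi_mem_nhds hs)

theorem ucpF_contDiffOn (N : ℕ) : ContDiffOn ℝ ∞ (ucpF N) (Ioi 0) := by
  rw [contDiffOn_infty_iff_deriv_of_isOpen isOpen_Ioi]
  refine ⟨fun s hs => (ucpF_hasDerivAt N hs).differentiableAt.differentiableWithinAt, ?_⟩
  have : ContDiffOn ℝ ∞ (fun s : ℝ => -(s ^ (-(N : ℝ) / 2))) (Ioi 0) := fun s hs =>
    ((Real.contDiffAt_rpow_const_of_ne (ne_of_gt hs)).neg).contDiffWithinAt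
  exact this.congr fun s hs => (ucpF_hasDerivAt N hs).deriv

theorem ucpF_anti (N : ℕ) {s t : ℝ} (hs : 0 < s) (hst : s ≤ t) : ucpF N t ≤ ucpF N s := by
  have h : AntitoneOn (ucpF N) (Ioi 0) := by
    apply antitoneOn_of_deriv_nonpos (convex_Ioi 0)
    · exact (ucpF_contDiffOn N).continuousOn
    · rw [interior_Ioi]
      exact fun s hs => (ucpF_hasDerivAt N hs).differentiableAt.differentiableWithinAt
    · rw [interior_Ioi]
      intro s hs
      rw [(ucpF_hasDerivAt N hs).deriv]
      have := Real.rpow_nonneg (le_of_lt hs) (-(N : ℝ) / 2)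
      linarith
  exact h hs (lt_of_lt_of_le hs hst) hst

theorem ucpF_nonneg (N : ℕ) {s : ℝ} (hs : 0 < s) (hs' : s ≤ 20) : 0 ≤ ucpF N s := by
  have h := ucpF_anti N hs hs'
  simpa [ucpF] using h

theorem ucpF_le (N : ℕ) (hN : 1 ≤ N) {s : ℝ} (hs : 0 < s) (hs' : s ≤ 20) :
    ucpF N s ≤ 10 * s ^ ((1 - (N : ℝ)) / 2) := by
  have h1 : ucpF N s ≤ ∫ t in s..20, s ^ ((1 - (N : ℝ)) / 2) * t ^ (-(1 : ℝ) / 2) := by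
    apply intervalIntegral.integral_mono_on hs'
    · exact ucp_intervalIntegrable hs (by norm_num)
    · exact (ucp_intervalIntegrable hs (by norm_num)).const_mul _
    · intro t ht
      have ht0 : 0 < t := lt_of_lt_of_le hs ht.1
      have : t ^ (-(N : ℝ) / 2) = t ^ ((1 - (N : ℝ)) / 2) * t ^ (-(1 : ℝ) / 2) := by
        rw [← Real.rpow_add ht0]; congr 1; ring
      rw [this]
      apply mul_le_mul_of_nonneg_right _ (Real.rpow_nonneg ht0.le _)
      apply Real.rpow_le_rpow_of_nonpos hs ht.1
      have : (1 : ℝ) ≤ N := by exact_mod_cast hN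
      linarith
  have h2 : (∫ t in s..20, t ^ (-(1 : ℝ) / 2)) ≤ 10 := by
    rw [integral_rpow (Or.inl (by norm_num))]
    have e : (-(1 : ℝ) / 2 + 1) = 1 / 2 := by norm_num
    rw [e, ← Real.sqrt_eq_rpow, ← Real.sqrt_eq_rpow]
    have h3 : √(20 : ℝ) ≤ 5 := by
      rw [Real.sqrt_le_left (by norm_num)]; norm_num
    have := Real.sqrt_nonneg s
    linarith
  rw [intervalIntegral.integral_const_mul] at h1
  have := mul_le_mul_of_nonneg_left h2 (Real.rpow_nonneg hs.le ((1 - (N : ℝ)) / 2))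
  linarith

/-! ### Laplacian, smoothed fundamental solution and its Taylor coefficients -/

/-- The directional derivative of `ψ` along `e`. -/
noncomputable def ucpD {N : ℕ} (e : EuclideanSpace ℝ (Fin N)) (ψ : EuclideanSpace ℝ (Fin N) → ℝ) :
    EuclideanSpace ℝ (Fin N) → ℝ := fun y => fderiv ℝ ψ y e

/-- The Laplacian as the sum of the iterated directional derivatives along the standard basis. At points where
`ψ` is `C²` it is the trace of the Hessian (`ucpD_ucpD`). -/
noncomputable def ucpLap {N : ℕ} (ψ : EuclideanSpace ℝ (Fin N) → ℝ)
    (y : EuclideanSpace ℝ (Fin N)) : ℝ :=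
  ∑ i : Fin N, ucpD (EuclideanSpace.single i 1) (ucpD (EuclideanSpace.single i 1) ψ) y

section calculus
variable {N : ℕ} {ψ φ : EuclideanSpace ℝ (Fin N) → ℝ} {O : Set (EuclideanSpace ℝ (Fin N))}
  {y : EuclideanSpace ℝ (Fin N)}

theorem ucpD_contDiffOn (hO : IsOpen O) (h : ContDiffOn ℝ ∞ ψ O) (e : EuclideanSpace ℝ (Fin N)) :
    ContDiffOn ℝ ∞ (ucpD e ψ) O :=
  (h.fderiv_of_isOpen hO (m := ∞) (by simp)).clm_apply contDiffOn_const

theorem ucpD_contDiffAt {n m : WithTop ℕ∞} (h : ContDiffAt ℝ n ψ y) (hm : m + 1 ≤ n)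
    (e : EuclideanSpace ℝ (Fin N)) : ContDiffAt ℝ m (ucpD e ψ) y :=
  (h.fderiv_right hm).clm_apply contDiffAt_const

theorem ucpD_congr (h : ψ =ᶠ[𝓝 y] φ) (e : EuclideanSpace ℝ (Fin N)) :
    ucpD e ψ =ᶠ[𝓝 y] ucpD e φ := by
  filter_upwards [h.fderiv (𝕜 := ℝ)] with z hz
  simp [ucpD, hz]

theorem ucpLap_congr (h : ψ =ᶠ[𝓝 y] φ) : ucpLap ψ =ᶠ[𝓝 y] ucpLap φ := by
  have : ∀ i : Fin N, ucpD (EuclideanSpace.single i 1) (ucpD (EuclideanSpace.single i 1) ψ) =ᶠ[𝓝 y]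
      ucpD (EuclideanSpace.single i 1) (ucpD (EuclideanSpace.single i 1) φ) := fun i =>
    ucpD_congr (ucpD_congr h _) _
  filter_upwards [eventually_all.2 this] with z hz
  simp only [ucpLap]
  exact Finset.sum_congr rfl fun i _ => hz i

theorem ucpD_ucpD (h : ContDiffAt ℝ 2 ψ y) (a b : EuclideanSpace ℝ (Fin N)) :
    ucpD a (ucpD b ψ) y = fderiv ℝ (fderiv ℝ ψ) y a b := by
  have hd : DifferentiableAt ℝ (fderiv ℝ ψ) y :=
    (h.fderiv_right (m := 1) (by norm_num)).differentiableAt (by norm_num)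
  have : HasFDerivAt (ucpD b ψ) ((fderiv ℝ (fderiv ℝ ψ) y).flip b) y := by
    have := hd.hasFDerivAt.clm_apply (hasFDerivAt_const b y)
    simpa [ucpD] using! this
  rw [ucpD, this.fderiv]
  rfl

theorem ucpD_comm (h : ContDiffAt ℝ 2 ψ y) (e e' : EuclideanSpace ℝ (Fin N)) :
    ucpD e (ucpD e' ψ) y = ucpD e' (ucpD e ψ) y := by
  have hs : IsSymmSndFDerivAt ℝ ψ y := h.isSymmSndFDerivAt (by simp)
  rw [ucpD_ucpD h, ucpD_ucpD h, hs]

theorem ucpD_add (hψ : DifferentiableAt ℝ ψ y) (hφ : DifferentiableAt ℝ φ y)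
    (e : EuclideanSpace ℝ (Fin N)) :
    ucpD e (fun z => ψ z + φ z) y = ucpD e ψ y + ucpD e φ y := by
  simp [ucpD, fderiv_fun_add hψ hφ]

theorem ucpD_const_mul (c : ℝ) (e : EuclideanSpace ℝ (Fin N)) :
    ucpD e (fun z => c * ψ z) = fun z => c * ucpD e ψ z := by
  funext z
  simp only [ucpD]
  rw [show (fun z => c * ψ z) = c • ψ from rfl, fderiv_const_smul_field]
  simp

theorem ucpLap_const_mul (c : ℝ) : ucpLap (fun z => c * ψ z) = fun z => c * ucpLap ψ z := by
  funext z
  simp [ucpLap, ucpD_const_mul, Finset.mul_sum]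

theorem ucpLap_add (hψ : ContDiffAt ℝ 2 ψ y) (hφ : ContDiffAt ℝ 2 φ y) :
    ucpLap (fun z => ψ z + φ z) y = ucpLap ψ y + ucpLap φ y := by
  simp only [ucpLap, ← Finset.sum_add_distrib]
  refine Finset.sum_congr rfl fun i _ => ?_
  have h1 : ucpD (EuclideanSpace.single i 1) (fun z => ψ z + φ z) =ᶠ[𝓝 y]
      fun z => ucpD (EuclideanSpace.single i 1) ψ z + ucpD (EuclideanSpace.single i 1) φ z := by
    filter_upwards [hψ.eventually (by simp), hφ.eventually (by simp)] with z h1 h2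
    exact ucpD_add (h1.differentiableAt (by norm_num)) (h2.differentiableAt (by norm_num)) _
  rw [(ucpD_congr h1 _).eq_of_nhds]
  exact ucpD_add ((ucpD_contDiffAt hψ (m := 1) (by norm_num) _).differentiableAt (by norm_num))
    ((ucpD_contDiffAt hφ (m := 1) (by norm_num) _).differentiableAt (by norm_num)) _

theorem ucpD_mul (hψ : DifferentiableAt ℝ ψ y) (hφ : DifferentiableAt ℝ φ y)
    (e : EuclideanSpace ℝ (Fin N)) :
    ucpD e (fun z => ψ z * φ z) y = ψ y * ucpD e φ y + φ y * ucpD e ψ y := by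
  simp [ucpD, fderiv_fun_mul hψ hφ]

theorem ucpLap_mul (hψ : ContDiffAt ℝ 2 ψ y) (hφ : ContDiffAt ℝ 2 φ y) :
    ucpLap (fun z => ψ z * φ z) y = ψ y * ucpLap φ y + φ y * ucpLap ψ y +
      2 * ∑ i : Fin N, ucpD (EuclideanSpace.single i 1) ψ y * ucpD (EuclideanSpace.single i 1) φ y := by
  simp only [ucpLap, Finset.mul_sum, ← Finset.sum_add_distrib]
  refine Finset.sum_congr rfl fun i _ => ?_
  set e : EuclideanSpace ℝ (Fin N) := EuclideanSpace.single i 1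
  have h1 : ucpD e (fun z => ψ z * φ z) =ᶠ[𝓝 y]
      fun z => ψ z * ucpD e φ z + φ z * ucpD e ψ z := by
    filter_upwards [hψ.eventually (by simp), hφ.eventually (by simp)] with z h1 h2
    exact ucpD_mul (h1.differentiableAt (by norm_num)) (h2.differentiableAt (by norm_num)) _
  have a1 := hψ.differentiableAt (by norm_num)
  have a2 := hφ.differentiableAt (by norm_num)
  have b1 := (ucpD_contDiffAt hψ (m := 1) (by norm_num) e).differentiableAt (by norm_num)
  have b2 := (ucpD_contDiffAt hφ (m := 1) (by norm_num) e).differentiableAt (by norm_num)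
  have c1 := ucpD_add (a1.mul b2) (a2.mul b1) e
  simp only [Pi.mul_apply] at c1
  rw [(ucpD_congr h1 _).eq_of_nhds, c1]
  have c2 := ucpD_mul a1 b2 e
  have c3 := ucpD_mul a2 b1 e
  simp only [Pi.mul_def]
  rw [c2, c3]
  ring

/-- Directional derivatives of harmonic functions are harmonic, because derivatives commute. -/
theorem ucpLap_ucpD_eq_zero (hO : IsOpen O) (h : ContDiffOn ℝ ∞ ψ O) (h0 : ∀ z ∈ O, ucpLap ψ z = 0)
    (x : EuclideanSpace ℝ (Fin N)) : ∀ z ∈ O, ucpLap (ucpD x ψ) z = 0 := by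
  intro z hz
  have hO' : O ∈ 𝓝 z := hO.mem_nhds hz
  have h2 : ∀ {φ : EuclideanSpace ℝ (Fin N) → ℝ}, ContDiffOn ℝ ∞ φ O → ∀ w ∈ O, ContDiffAt ℝ 2 φ w :=
    fun hφ w hw => (hφ.contDiffAt (hO.mem_nhds hw)).of_le ENat.LEInfty.out
  have key : ∀ i : Fin N, ucpD (EuclideanSpace.single i 1) (ucpD (EuclideanSpace.single i 1) (ucpD x ψ)) z
      = ucpD x (ucpD (EuclideanSpace.single i 1) (ucpD (EuclideanSpace.single i 1) ψ)) z := by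
    intro i
    set e : EuclideanSpace ℝ (Fin N) := EuclideanSpace.single i 1
    have h1 : ucpD e (ucpD x ψ) =ᶠ[𝓝 z] ucpD x (ucpD e ψ) := by
      filter_upwards [hO'] with w hw using ucpD_comm (h2 h w hw) _ _
    rw [(ucpD_congr h1 _).eq_of_nhds, ucpD_comm (h2 (ucpD_contDiffOn hO h e) z hz)]
  have h3 : ucpLap ψ =ᶠ[𝓝 z] fun _ => 0 := by
    filter_upwards [hO'] with w hw using h0 w hw
  have h4 : ucpD x (ucpLap ψ) z = 0 := by
    rw [(ucpD_congr h3 x).eq_of_nhds]; simp [ucpD]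
  rw [← h4]
  have h5 : ucpD x (ucpLap ψ) z = ∑ i : Fin N, ucpD x (ucpD (EuclideanSpace.single i 1)
      (ucpD (EuclideanSpace.single i 1) ψ)) z := by
    have : HasFDerivAt (ucpLap ψ) (∑ i : Fin N, fderiv ℝ (ucpD (EuclideanSpace.single i 1)
      (ucpD (EuclideanSpace.single i 1) ψ)) z) z := by
      apply HasFDerivAt.fun_sum
      intro i _
      exact ((h2 (ucpD_contDiffOn hO (ucpD_contDiffOn hO h _) _) z hz).differentiableAt
        (by norm_num)).hasFDerivAt
    rw [ucpD, this.fderiv]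
    simp [ucpD]
  rw [h5]
  exact Finset.sum_congr rfl fun i _ => key i

end calculus

section kernel
variable {N : ℕ}

theorem ucp_hasFDerivAt_normsq (x y : EuclideanSpace ℝ (Fin N)) (μ : ℝ) :
    HasFDerivAt (fun z => ‖z - x‖ ^ 2 + μ) (2 • innerSL ℝ (y - x)) y := by
  have := ((hasStrictFDerivAt_norm_sq (y - x)).hasFDerivAt.comp y
    ((hasFDerivAt_id y).sub_const x)).add_const μ
  simpa using! this

theorem ucpF_comp_contDiffAt {x y : EuclideanSpace ℝ (Fin N)} {μ : ℝ} (h : 0 < ‖y - x‖ ^ 2 + μ) :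
    ContDiffAt ℝ ∞ (fun z => ucpF N (‖z - x‖ ^ 2 + μ)) y := by
  have h1 : ContDiffAt ℝ ∞ (ucpF N) (‖y - x‖ ^ 2 + μ) :=
    (ucpF_contDiffOn N).contDiffAt (Ioi_mem_nhds h)
  have h2 : ContDiffAt ℝ ∞ (fun z : EuclideanSpace ℝ (Fin N) => ‖z - x‖ ^ 2 + μ) y :=
    ((contDiffAt_id.sub contDiffAt_const).norm_sq ℝ).add contDiffAt_const
  exact h1.comp y h2

theorem ucpD_F_comp {x y : EuclideanSpace ℝ (Fin N)} {μ : ℝ} (h : 0 < ‖y - x‖ ^ 2 + μ)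
    (e : EuclideanSpace ℝ (Fin N)) :
    ucpD e (fun z => ucpF N (‖z - x‖ ^ 2 + μ)) y =
      -2 * inner ℝ (y - x) e * (‖y - x‖ ^ 2 + μ) ^ (-(N : ℝ) / 2) := by
  have := (ucpF_hasDerivAt N h).comp_hasFDerivAt y (ucp_hasFDerivAt_normsq x y μ)
  have h2 := this.fderiv
  simp only [ucpD]
  rw [show (fun z => ucpF N (‖z - x‖ ^ 2 + μ)) = ucpF N ∘ fun z => ‖z - x‖ ^ 2 + μ from rfl, h2]
  simp [inner_sub_left]
  ring

/-- Adding `μ > 0` to `‖y - x‖²` smooths the fundamental solution; its Laplacian becomes minus a positive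
bump concentrating at `x` as `μ → 0`, and is zero away from `x` for `μ = 0`. -/
theorem ucpLap_F_comp {x y : EuclideanSpace ℝ (Fin N)} {μ : ℝ} (h : 0 < ‖y - x‖ ^ 2 + μ) :
    ucpLap (fun z => ucpF N (‖z - x‖ ^ 2 + μ)) y =
      -(2 * N * μ * (‖y - x‖ ^ 2 + μ) ^ (-((N : ℝ) + 2) / 2)) := by
  set s := ‖y - x‖ ^ 2 + μ with hs
  have hopen : ∀ᶠ z in 𝓝 y, 0 < ‖z - x‖ ^ 2 + μ := by
    have : ContinuousAt (fun z : EuclideanSpace ℝ (Fin N) => ‖z - x‖ ^ 2 + μ) y := by fun_prop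
    exact this.eventually (lt_mem_nhds h)
  have key : ∀ e : EuclideanSpace ℝ (Fin N), ucpD e (ucpD e (fun z => ucpF N (‖z - x‖ ^ 2 + μ))) y =
      -2 * inner ℝ e e * s ^ (-(N : ℝ) / 2) +
        2 * N * (inner ℝ (y - x) e) ^ 2 * s ^ (-((N : ℝ) + 2) / 2) := by
    intro e
    have h1 : ucpD e (fun z => ucpF N (‖z - x‖ ^ 2 + μ)) =ᶠ[𝓝 y]
        fun z => -2 * inner ℝ (z - x) e * (‖z - x‖ ^ 2 + μ) ^ (-(N : ℝ) / 2) := by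
      filter_upwards [hopen] with z hz using ucpD_F_comp hz e
    rw [(ucpD_congr h1 e).eq_of_nhds]
    have d1 : HasFDerivAt (fun z : EuclideanSpace ℝ (Fin N) => -2 * inner ℝ (z - x) e)
        ((-2 : ℝ) • innerSL ℝ e) y := by
      have : HasFDerivAt (fun z : EuclideanSpace ℝ (Fin N) => inner ℝ e (z - x)) (innerSL ℝ e) y := by
        have := (innerSL ℝ e).hasFDerivAt.comp y ((hasFDerivAt_id y).sub_const x)
        simpa using! this
      have := this.const_mul (-2)
      simpa only [real_inner_comm] using this
    have d2 := (Real.hasDerivAt_rpow_const (x := s) (p := -(N : ℝ) / 2)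
      (Or.inl h.ne')).comp_hasFDerivAt y (ucp_hasFDerivAt_normsq x y μ)
    have d3 := (d1.mul d2).fderiv
    simp only [ucpD]
    have e1 : (fun z : EuclideanSpace ℝ (Fin N) => -2 * inner ℝ (z - x) e * (‖z - x‖ ^ 2 + μ) ^ (-(N : ℝ) / 2))
      = (fun z : EuclideanSpace ℝ (Fin N) => -2 * inner ℝ (z - x) e) *
        ((fun x ↦ x ^ (-(N : ℝ) / 2)) ∘ fun z => ‖z - x‖ ^ 2 + μ) := rfl
    rw [e1, d3]
    simp [inner_sub_left]
    rw [show -(N : ℝ) / 2 - 1 = -((N : ℝ) + 2) / 2 by ring, ← hs]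
    ring_nf
  simp only [ucpLap, key, Finset.sum_add_distrib, ← Finset.sum_mul, ← Finset.mul_sum]
  have hsum : ∑ i : Fin N, (inner ℝ (y - x) (EuclideanSpace.single i (1:ℝ))) ^ 2 = ‖y - x‖ ^ 2 := by
    rw [EuclideanSpace.norm_sq_eq]
    simp [EuclideanSpace.inner_single_right]
  rw [hsum]
  have hs2 : s ^ (-(N : ℝ) / 2) = s * s ^ (-((N : ℝ) + 2) / 2) := by
    nth_rewrite 2 [← Real.rpow_one s]
    rw [← Real.rpow_add h]; congr 1; ring
  rw [hs2]
  simp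
  rw [show ‖y - x‖ ^ 2 = s - μ by rw [hs]; ring]
  ring

/-- `ucpG N x k y` is the coefficient of `t ^ k` in the Taylor expansion at `t = 0` of `t ↦ F(‖y - t x‖²)`,
that is, the part of `F(‖y - x‖²)` homogeneous of degree `k` in `x`. -/
noncomputable def ucpG (N : ℕ) (x : EuclideanSpace ℝ (Fin N)) : ℕ → EuclideanSpace ℝ (Fin N) → ℝ
  | 0 => fun y => ucpF N (‖y‖ ^ 2)
  | k + 1 => fun y => (-(1 / ((k : ℝ) + 1))) * ucpD x (ucpG N x k) y

theorem ucpG_contDiffOn (x : EuclideanSpace ℝ (Fin N)) (k : ℕ) :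
    ContDiffOn ℝ ∞ (ucpG N x k) {0}ᶜ := by
  induction k with
  | zero =>
    intro y hy
    have : 0 < ‖y - 0‖ ^ 2 + 0 := by
      have := norm_pos_iff.2 hy
      simp; positivity
    have := (ucpF_comp_contDiffAt this).contDiffWithinAt (s := {0}ᶜ)
    simpa [ucpG] using! this
  | succ k ih =>
    exact contDiffOn_const.mul (ucpD_contDiffOn isOpen_compl_singleton ih x)

theorem ucpLap_ucpG (x : EuclideanSpace ℝ (Fin N)) (k : ℕ) :
    ∀ y ∈ ({0}ᶜ : Set (EuclideanSpace ℝ (Fin N))), ucpLap (ucpG N x k) y = 0 := by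
  induction k with
  | zero =>
    intro y hy
    have : 0 < ‖y - 0‖ ^ 2 + 0 := by
      have := norm_pos_iff.2 hy
      simp; positivity
    have := ucpLap_F_comp this
    simpa [ucpG] using! this
  | succ k ih =>
    intro y hy
    simp only [ucpG]
    rw [ucpLap_const_mul]
    simp [ucpLap_ucpD_eq_zero isOpen_compl_singleton (ucpG_contDiffOn x k) ih x y hy]

end kernel

/-! ### Complex extension and bounds for the Taylor coefficients -/

section expansion
variable {N : ℕ}

theorem ucpG_one {x z : EuclideanSpace ℝ (Fin N)} (hz : z ≠ 0) :
    ucpG N x 1 z = 2 * inner ℝ z x * (‖z‖ ^ 2) ^ (-(N : ℝ) / 2) := by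
  have h : 0 < ‖z - 0‖ ^ 2 + 0 := by
    have := norm_pos_iff.2 hz
    simp; positivity
  have := ucpD_F_comp h x
  simp only [sub_zero, add_zero] at this
  simp only [ucpG, this]
  norm_num

theorem ucpG_line_hasDerivAt (x y : EuclideanSpace ℝ (Fin N)) (k : ℕ) {t : ℝ} (h : y - t • x ≠ 0) :
    HasDerivAt (fun s : ℝ => ucpG N x k (y - s • x)) ((k + 1 : ℝ) * ucpG N x (k + 1) (y - t • x)) t := by
  have h1 : HasFDerivAt (ucpG N x k) (fderiv ℝ (ucpG N x k) (y - t • x)) (y - t • x) :=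
    (((ucpG_contDiffOn x k).contDiffAt (isOpen_compl_singleton.mem_nhds h)).differentiableAt
      (by simp)).hasFDerivAt
  have h2 : HasDerivAt (fun s : ℝ => y - s • x) (-x) t := by
    have := ((hasDerivAt_id t).smul_const x).const_sub y
    simpa using this
  have h3 := h1.comp_hasDerivAt t h2
  refine h3.congr_deriv ?_
  rw [map_neg]
  change _ = (k + 1 : ℝ) * (-(1 / ((k : ℝ) + 1)) * fderiv ℝ (ucpG N x k) (y - t • x) x)
  have : (k : ℝ) + 1 ≠ 0 := by positivity
  field_simp

/-- A complex number `ζ` of modulus `‖x‖ / ‖y‖` with `(1 - t ζ) (1 - t conj ζ) = ‖y - t x‖² / ‖y‖²` for real `t`.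
The quantity under the square root is nonnegative by the Cauchy-Schwarz inequality. -/
noncomputable def ucpRoot (x y : EuclideanSpace ℝ (Fin N)) : ℂ :=
  ⟨inner ℝ x y / ‖y‖ ^ 2, √((‖x‖ / ‖y‖) ^ 2 - (inner ℝ x y / ‖y‖ ^ 2) ^ 2)⟩

theorem ucpRoot_normSq {x y : EuclideanSpace ℝ (Fin N)} (hy : y ≠ 0) :
    Complex.normSq (ucpRoot x y) = (‖x‖ / ‖y‖) ^ 2 := by
  have hy' := norm_pos_iff.2 hy
  have h : 0 ≤ (‖x‖ / ‖y‖) ^ 2 - (inner ℝ x y / ‖y‖ ^ 2) ^ 2 := by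
    have h1 := abs_real_inner_le_norm x y
    have h2 : (inner ℝ x y) ^ 2 ≤ (‖x‖ * ‖y‖) ^ 2 := sq_le_sq' (by linarith [neg_abs_le (inner ℝ x y)])
      (le_trans (le_abs_self _) h1)
    have h3 : (‖x‖ / ‖y‖) ^ 2 - (inner ℝ x y / ‖y‖ ^ 2) ^ 2
      = ((‖x‖ * ‖y‖) ^ 2 - (inner ℝ x y) ^ 2) / ‖y‖ ^ 4 := by
      field_simp
    rw [h3]
    exact div_nonneg (by linarith) (by positivity)
  rw [Complex.normSq_apply, ucpRoot]
  simp only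
  rw [Real.mul_self_sqrt h]
  ring

theorem ucpRoot_norm {x y : EuclideanSpace ℝ (Fin N)} (hy : y ≠ 0) :
    ‖ucpRoot x y‖ = ‖x‖ / ‖y‖ := by
  have h := ucpRoot_normSq (x := x) hy
  rw [Complex.normSq_eq_norm_sq] at h
  exact (pow_left_inj₀ (norm_nonneg _) (by positivity) (by norm_num)).1 h

theorem ucpRoot_line {x y : EuclideanSpace ℝ (Fin N)} (hy : y ≠ 0) (t : ℝ) :
    ‖1 - (t : ℂ) * ucpRoot x y‖ ^ 2 = ‖y - t • x‖ ^ 2 / ‖y‖ ^ 2 := by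
  have hy' := norm_pos_iff.2 hy
  have h := ucpRoot_normSq (x := x) hy
  rw [Complex.normSq_apply] at h
  rw [← Complex.normSq_eq_norm_sq, Complex.normSq_apply, norm_sub_sq_real, norm_smul, inner_smul_right,
    Real.norm_eq_abs, mul_pow, sq_abs]
  simp only [Complex.sub_re, Complex.one_re, Complex.mul_re, Complex.ofReal_re, Complex.ofReal_im,
    zero_mul, sub_zero, Complex.sub_im, Complex.one_im, Complex.mul_im, add_zero, zero_sub]
  have h2 : (ucpRoot x y).re = inner ℝ x y / ‖y‖ ^ 2 := rfl
  have h3 : (1 - t * (ucpRoot x y).re) * (1 - t * (ucpRoot x y).re) + -(t * (ucpRoot x y).im) * -(t * (ucpRoot x y).im)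
    = 1 - 2 * t * (ucpRoot x y).re + t ^ 2 * ((ucpRoot x y).re * (ucpRoot x y).re + (ucpRoot x y).im * (ucpRoot x y).im) := by
    ring
  rw [h3, h, h2, real_inner_comm y x]
  field_simp

/-- The holomorphic extension to `‖z‖ ‖x‖ / ‖y‖ < 1` of `t ↦ ucpG N x 1 (y - t x)`, the derivative of
`t ↦ F(‖y - t x‖²)`. Passing to the derivative avoids the logarithm in dimension two. -/
noncomputable def ucpH (x y : EuclideanSpace ℝ (Fin N)) (z : ℂ) : ℂ :=
  (2 * (inner ℝ y x : ℝ) - 2 * z * ((‖x‖ ^ 2 : ℝ) : ℂ)) * (((‖y‖ ^ 2) ^ (-(N : ℝ) / 2) : ℝ) : ℂ) *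
    ((1 - z * ucpRoot x y) ^ ((-(N : ℝ) / 2 : ℝ) : ℂ) *
      (1 - z * (starRingEnd ℂ) (ucpRoot x y)) ^ ((-(N : ℝ) / 2 : ℝ) : ℂ))

theorem ucp_one_sub_re_pos {z w : ℂ} (h : ‖z‖ * ‖w‖ < 1) : 0 < (1 - z * w).re := by
  have h1 := Complex.re_le_norm (z * w)
  rw [norm_mul] at h1
  simp only [Complex.sub_re, Complex.one_re]
  linarith

theorem ucpH_differentiableAt {x y : EuclideanSpace ℝ (Fin N)} (hy : y ≠ 0) {z : ℂ}
    (hz : ‖z‖ * (‖x‖ / ‖y‖) < 1) : DifferentiableAt ℂ (ucpH x y) z := by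
  rw [← ucpRoot_norm hy] at hz
  have hz' : ‖z‖ * ‖(starRingEnd ℂ) (ucpRoot x y)‖ < 1 := by rwa [Complex.norm_conj]
  have d1 : DifferentiableAt ℂ (fun z : ℂ => (1 - z * ucpRoot x y) ^ ((-(N : ℝ) / 2 : ℝ) : ℂ)) z :=
    DifferentiableAt.cpow_const (by fun_prop) (Or.inl (ucp_one_sub_re_pos hz))
  have d2 : DifferentiableAt ℂ (fun z : ℂ => (1 - z * (starRingEnd ℂ) (ucpRoot x y)) ^ ((-(N : ℝ) / 2 : ℝ) : ℂ)) z :=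
    DifferentiableAt.cpow_const (by fun_prop) (Or.inl (ucp_one_sub_re_pos hz'))
  exact DifferentiableAt.mul (by fun_prop) (d1.mul d2)

theorem ucp_line_ne_zero {x y : EuclideanSpace ℝ (Fin N)} (hy : y ≠ 0) {t : ℝ}
    (ht : |t| * (‖x‖ / ‖y‖) < 1) : y - t • x ≠ 0 := by
  intro h
  have h1 : ‖y‖ = |t| * ‖x‖ := by
    rw [sub_eq_zero.1 h, norm_smul, Real.norm_eq_abs]
  have hy' := norm_pos_iff.2 hy
  rw [← mul_div_assoc, ← h1, div_self hy'.ne'] at ht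
  exact lt_irrefl _ ht

theorem ucpH_real {x y : EuclideanSpace ℝ (Fin N)} (hy : y ≠ 0) {t : ℝ}
    (ht : |t| * (‖x‖ / ‖y‖) < 1) : ucpH x y t = ((ucpG N x 1 (y - t • x) : ℝ) : ℂ) := by
  have hy' := norm_pos_iff.2 hy
  rw [ucpG_one (ucp_line_ne_zero hy ht), ucpH]
  have ht' : ‖(t : ℂ)‖ * ‖ucpRoot x y‖ < 1 := by
    rw [ucpRoot_norm hy]; simpa using ht
  have hpos := ucp_one_sub_re_pos ht'
  set w₀ : ℂ := 1 - (t : ℂ) * ucpRoot x y with hw₀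
  have h1 : (1 - (t : ℂ) * (starRingEnd ℂ) (ucpRoot x y)) = (starRingEnd ℂ) w₀ := by
    simp [hw₀]
  have hne : w₀ ≠ 0 := fun h => by simp [h] at hpos
  have hw₀2 : ‖w₀‖ ^ 2 = ‖y - t • x‖ ^ 2 / ‖y‖ ^ 2 := ucpRoot_line hy t
  have harg : w₀.arg ≠ Real.pi := by
    intro h
    rw [Complex.arg_eq_pi_iff] at h
    linarith [h.1]
  have h2 : w₀ ^ ((-(N : ℝ) / 2 : ℝ) : ℂ) * (starRingEnd ℂ) w₀ ^ ((-(N : ℝ) / 2 : ℝ) : ℂ)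
      = (((‖w₀‖ ^ 2) ^ (-(N : ℝ) / 2) : ℝ) : ℂ) := by
    have h3 : (starRingEnd ℂ) w₀ ^ ((-(N : ℝ) / 2 : ℝ) : ℂ) = (starRingEnd ℂ) (w₀ ^ ((-(N : ℝ) / 2 : ℝ) : ℂ)) := by
      rw [Complex.conj_cpow _ _ harg, Complex.conj_ofReal]
    rw [h3, Complex.mul_conj, Complex.normSq_eq_norm_sq, Complex.norm_cpow_real, ← Real.rpow_natCast,
      ← Real.rpow_natCast, ← Real.rpow_mul (norm_nonneg _), ← Real.rpow_mul (norm_nonneg _), mul_comm]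
  rw [h1, h2, hw₀2]
  have h4 : (‖y - t • x‖ ^ 2) ^ (-(N : ℝ) / 2) =
      (‖y‖ ^ 2) ^ (-(N : ℝ) / 2) * (‖y - t • x‖ ^ 2 / ‖y‖ ^ 2) ^ (-(N : ℝ) / 2) := by
    rw [← Real.mul_rpow (by positivity) (by positivity)]
    congr 1
    field_simp
  have h5 : (inner ℝ (y - t • x) x : ℝ) = inner ℝ y x - t * ‖x‖ ^ 2 := by
    rw [inner_sub_left, inner_smul_left, real_inner_self_eq_norm_sq]; simp
  rw [h4, h5]
  push_cast
  ring

theorem ucpH_norm_le {x y : EuclideanSpace ℝ (Fin N)} (hx2 : ‖x‖ ≤ 2) (hy1 : 1 ≤ ‖y‖)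
    (hy2 : ‖y‖ ≤ 2) {κ : ℝ} (hκ0 : 0 < κ) (hκ1 : κ < 1) {z : ℂ} (hz : ‖z‖ * (‖x‖ / ‖y‖) = κ) :
    ‖ucpH x y z‖ ≤ 16 * ((1 - κ)⁻¹) ^ N := by
  have hy : y ≠ 0 := fun h => by simp [h] at hy1; linarith
  have hy' := norm_pos_iff.2 hy
  have hκ' : 0 < 1 - κ := by linarith
  have key : ∀ w : ℂ, ‖w‖ = ‖x‖ / ‖y‖ → ‖(1 - z * w) ^ ((-(N : ℝ) / 2 : ℝ) : ℂ)‖ ≤ (1 - κ) ^ (-(N : ℝ) / 2) := by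
    intro w hw
    rw [Complex.norm_cpow_real]
    apply Real.rpow_le_rpow_of_nonpos hκ'
    · have := norm_sub_norm_le (1 : ℂ) (z * w)
      rw [norm_mul, hw, hz, norm_one] at this
      exact this
    · have : (0 : ℝ) ≤ N := by positivity
      linarith
  have k1 := key _ (ucpRoot_norm (x := x) hy)
  have k2 := key ((starRingEnd ℂ) (ucpRoot x y)) (by rw [Complex.norm_conj, ucpRoot_norm hy])
  have k3 : (1 - κ) ^ (-(N : ℝ) / 2) * (1 - κ) ^ (-(N : ℝ) / 2) = ((1 - κ)⁻¹) ^ N := by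
    rw [← Real.rpow_add hκ', inv_pow, ← Real.rpow_natCast, ← Real.rpow_neg hκ'.le]
    congr 1; ring
  have k4 : ‖(2 * ((inner ℝ y x : ℝ) : ℂ) - 2 * z * ((‖x‖ ^ 2 : ℝ) : ℂ))‖ ≤ 16 := by
    refine (norm_sub_le _ _).trans ?_
    simp only [norm_mul, Complex.norm_real, Complex.norm_ofNat, Real.norm_eq_abs, abs_pow, abs_norm]
    have h1 := abs_real_inner_le_norm y x
    have h2 : ‖y‖ * ‖x‖ ≤ 4 := by nlinarith [norm_nonneg x]
    have h3 : ‖z‖ * ‖x‖ ^ 2 = κ * (‖y‖ * ‖x‖) := by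
      rw [← hz]; field_simp
    have h4 : κ * (‖y‖ * ‖x‖) ≤ 4 := by nlinarith [norm_nonneg x]
    nlinarith
  have k5 : (‖y‖ ^ 2) ^ (-(N : ℝ) / 2) ≤ 1 := by
    apply Real.rpow_le_one_of_one_le_of_nonpos
    · nlinarith
    · have : (0 : ℝ) ≤ N := by positivity
      linarith
  rw [ucpH, norm_mul, norm_mul, norm_mul, Complex.norm_real, Real.norm_eq_abs,
    abs_of_nonneg (Real.rpow_nonneg (by positivity) _), ← k3]
  have k6 := mul_le_mul k1 k2 (norm_nonneg _) (by positivity)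
  have k7 := mul_le_mul k4 k5 (by positivity) (by norm_num)
  have := mul_le_mul k7 k6 (by positivity) (by norm_num)
  linarith

theorem ucpH_iteratedDeriv {x y : EuclideanSpace ℝ (Fin N)} (hy : y ≠ 0) (k : ℕ) :
    ∀ t : ℝ, |t| * (‖x‖ / ‖y‖) < 1 →
      iteratedDeriv k (ucpH x y) t = (((k + 1).factorial * ucpG N x (k + 1) (y - t • x) : ℝ) : ℂ) := by
  have hO : IsOpen {z : ℂ | ‖z‖ * (‖x‖ / ‖y‖) < 1} :=
    isOpen_lt (by fun_prop) continuous_const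
  have hdiff : DifferentiableOn ℂ (ucpH x y) {z : ℂ | ‖z‖ * (‖x‖ / ‖y‖) < 1} := fun z hz =>
    (ucpH_differentiableAt hy hz).differentiableWithinAt
  induction k with
  | zero =>
    intro t ht
    simp [ucpH_real hy ht]
  | succ k ih =>
    intro t ht
    rw [iteratedDeriv_succ]
    have hmem : {z : ℂ | ‖z‖ * (‖x‖ / ‖y‖) < 1} ∈ 𝓝 (t : ℂ) := hO.mem_nhds (by simpa using ht)
    have hd : DifferentiableAt ℂ (iteratedDeriv k (ucpH x y)) t := by
      rw [iteratedDeriv_eq_iterate]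
      exact ((hdiff.analyticAt hmem).iterated_deriv k).differentiableAt
    have h1 : HasDerivAt (fun s : ℝ => iteratedDeriv k (ucpH x y) s) (deriv (iteratedDeriv k (ucpH x y)) t) t :=
      hd.hasDerivAt.comp_ofReal
    have h2 : HasDerivAt (fun s : ℝ => (((k + 1).factorial * ucpG N x (k + 1) (y - s • x) : ℝ) : ℂ))
        (((k + 1).factorial * (((k + 1 : ℕ) + 1 : ℝ) * ucpG N x (k + 1 + 1) (y - t • x)) : ℝ) : ℂ) t :=
      ((ucpG_line_hasDerivAt x y (k + 1) (ucp_line_ne_zero hy ht)).const_mul _).ofReal_comp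
    have hev : (fun s : ℝ => iteratedDeriv k (ucpH x y) s) =ᶠ[𝓝 t]
        fun s : ℝ => (((k + 1).factorial * ucpG N x (k + 1) (y - s • x) : ℝ) : ℂ) := by
      have : {s : ℝ | |s| * (‖x‖ / ‖y‖) < 1} ∈ 𝓝 t :=
        (isOpen_lt (by fun_prop) continuous_const).mem_nhds ht
      filter_upwards [this] with s hs using ih s hs
    rw [h1.unique (h2.congr_of_eventuallyEq hev)]
    rw [Nat.factorial_succ (k + 1)]
    push_cast
    ring

/-- Bound for the Taylor coefficients, from the Cauchy estimates for `ucpH x y` on the circle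
`‖z‖ ‖x‖ / ‖y‖ = κ`. -/
theorem ucpG_bound {x y : EuclideanSpace ℝ (Fin N)} (hx0 : x ≠ 0) (hx2 : ‖x‖ ≤ 2) (hy1 : 1 ≤ ‖y‖)
    (hy2 : ‖y‖ ≤ 2) {κ : ℝ} (hκ0 : 0 < κ) (hκ1 : κ < 1) (k : ℕ) :
    (k + 1) * |ucpG N x (k + 1) y| ≤ 16 * ((1 - κ)⁻¹) ^ N * (‖x‖ / ‖y‖ / κ) ^ k := by
  have hy : y ≠ 0 := fun h => by simp [h] at hy1; linarith
  have hy' := norm_pos_iff.2 hy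
  have hx' := norm_pos_iff.2 hx0
  have hb : 0 < ‖x‖ / ‖y‖ := by positivity
  have hdc : DiffContOnCl ℂ (ucpH x y) (ball 0 (κ / (‖x‖ / ‖y‖))) := by
    apply DifferentiableOn.diffContOnCl
    intro z hz
    have hz' := closure_ball_subset_closedBall hz
    rw [mem_closedBall_zero_iff, le_div_iff₀ hb] at hz'
    exact (ucpH_differentiableAt hy (by linarith)).differentiableWithinAt
  have := Complex.norm_iteratedDeriv_le_of_forall_mem_sphere_norm_le k (by positivity) hdc
    (C := 16 * ((1 - κ)⁻¹) ^ N) (fun z hz => ucpH_norm_le hx2 hy1 hy2 hκ0 hκ1 (by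
      rw [mem_sphere_zero_iff_norm] at hz
      rw [hz]; field_simp))
  have h2 := ucpH_iteratedDeriv (x := x) hy k 0 (by simp)
  simp only [Complex.ofReal_zero, zero_smul, sub_zero] at h2
  rw [h2, Complex.norm_real, Real.norm_eq_abs, abs_mul, Nat.abs_cast, Nat.factorial_succ] at this
  push_cast at this
  have hf : (0 : ℝ) < k.factorial := by exact_mod_cast Nat.factorial_pos k
  have e1 : (‖x‖ / ‖y‖ / κ) ^ k = 1 / (κ / (‖x‖ / ‖y‖)) ^ k := by
    rw [← one_div_pow, one_div_div]
  rw [e1]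
  have h3 : (k.factorial : ℝ) * ((k + 1) * |ucpG N x (k + 1) y|) ≤
      k.factorial * (16 * ((1 - κ)⁻¹) ^ N * (1 / (κ / (‖x‖ / ‖y‖)) ^ k)) := by
    calc _ = ((k : ℝ) + 1) * k.factorial * |ucpG N x (k + 1) y| := by ring
      _ ≤ _ := this
      _ = _ := by ring
  exact le_of_mul_le_mul_left h3 hf

end expansion

/-! ### The Taylor remainder of the fundamental solution -/

section kernel
variable {N : ℕ}

theorem ucpG_hasSum {x y : EuclideanSpace ℝ (Fin N)} (hx0 : x ≠ 0) (hy : y ≠ 0) {t : ℝ}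
    (ht : |t| * (‖x‖ / ‖y‖) < 1) :
    HasSum (fun k : ℕ => ((k : ℝ) + 1) * ucpG N x (k + 1) y * t ^ k) (ucpG N x 1 (y - t • x)) := by
  have hy' := norm_pos_iff.2 hy
  have hx' := norm_pos_iff.2 hx0
  have hb : 0 < ‖x‖ / ‖y‖ := by positivity
  have hd : DifferentiableOn ℂ (ucpH x y) (ball 0 (1 / (‖x‖ / ‖y‖))) := by
    intro z hz
    rw [mem_ball_zero_iff, lt_div_iff₀ hb] at hz
    exact (ucpH_differentiableAt hy hz).differentiableWithinAt
  have hz : (t : ℂ) ∈ ball (0 : ℂ) (1 / (‖x‖ / ‖y‖)) := by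
    rw [mem_ball_zero_iff, lt_div_iff₀ hb]
    simpa using ht
  have h := Complex.hasSum_taylorSeries_on_ball hd hz
  rw [ucpH_real hy ht] at h
  rw [← Complex.hasSum_ofReal]
  suffices hfun : (fun k : ℕ => ((((k : ℝ) + 1) * ucpG N x (k + 1) y * t ^ k : ℝ) : ℂ)) =
      fun n : ℕ => ((n.factorial : ℂ))⁻¹ • ((t : ℂ) - 0) ^ n • iteratedDeriv n (ucpH x y) 0 by
    rw [hfun]; exact h
  funext k
  have h2 := ucpH_iteratedDeriv (x := x) hy k 0 (by simp)
  simp only [Complex.ofReal_zero, zero_smul, sub_zero] at h2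
  rw [h2, Nat.factorial_succ]
  have hf : (k.factorial : ℂ) ≠ 0 := by exact_mod_cast Nat.factorial_ne_zero k
  simp only [smul_eq_mul, sub_zero]
  push_cast
  field_simp

theorem ucp_kappa_pow {m : ℕ} (hm : 1 ≤ m) {k : ℕ} (hk : k ≤ m) :
    (1 : ℝ) / 2 ≤ (1 - 1 / (4 * m)) ^ k := by
  have hm' : (1 : ℝ) ≤ m := by exact_mod_cast hm
  have h0 : 1 / (4 * (m : ℝ)) ≤ 1 / 4 := by
    apply one_div_le_one_div_of_le <;> linarith
  have h0' : 0 < 1 / (4 * (m : ℝ)) := by positivity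
  have h1 := one_add_mul_le_pow (a := -(1 / (4 * (m : ℝ)))) (by linarith) k
  have h2 : (k : ℝ) * (1 / (4 * (m : ℝ))) ≤ 1 / 4 := by
    have : (k : ℝ) ≤ m := by exact_mod_cast hk
    rw [mul_one_div, div_le_div_iff₀ (by positivity) (by norm_num)]
    linarith
  rw [← sub_eq_add_neg] at h1
  linarith

/-- The remainder of the Taylor expansion when `‖x‖ / ‖y‖` is at least `1 - 1 / (2 m)`: then
`(‖x‖ / ‖y‖) ^ m` is bounded below, and each of the `m + 1` coefficients can be estimated separately. -/
theorem ucp_kernel_near {x y : EuclideanSpace ℝ (Fin N)} (hN : 1 ≤ N) (hx0 : x ≠ 0) (hx2 : ‖x‖ ≤ 2) (hy1 : 1 ≤ ‖y‖)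
    (hy2 : ‖y‖ ≤ 2) (hxy : x ≠ y) {m : ℕ} (hm : 1 ≤ m) (hb : 1 - 1 / (2 * (m : ℝ)) ≤ ‖x‖ / ‖y‖) :
    |ucpF N (‖y - x‖ ^ 2) - ∑ k ∈ Finset.range (m + 1), ucpG N x k y| ≤
      84 * (4 * m : ℝ) ^ (N + 1) * (‖x‖ / ‖y‖) ^ m * (1 + ucpF N (‖y - x‖ ^ 2)) := by
  have hm' : (1 : ℝ) ≤ m := by exact_mod_cast hm
  set b := ‖x‖ / ‖y‖ with hbdef
  have hb0 : 0 ≤ b := by positivity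
  have h0 : 1 / (2 * (m : ℝ)) ≤ 1 / 2 := by
    apply one_div_le_one_div_of_le <;> linarith
  have h0' : 1 / (4 * (m : ℝ)) ≤ 1 / 4 := by
    apply one_div_le_one_div_of_le <;> linarith
  have h0'' : 0 < 1 / (4 * (m : ℝ)) := by positivity
  have hbm : 1 / 2 ≤ b ^ m := by
    have h1 := one_add_mul_le_pow (a := -(1 / (2 * (m : ℝ)))) (by linarith) m
    have h2 : 1 + (m : ℝ) * -(1 / (2 * (m : ℝ))) = 1 / 2 := by field_simp; norm_num
    rw [h2] at h1
    refine h1.trans (pow_le_pow_left₀ (by linarith) (by linarith) _)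
  have hbk : ∀ k ≤ m, b ^ k ≤ 2 * b ^ m := by
    intro k hk
    rcases le_total 1 b with h | h
    · have := pow_le_pow_right₀ h hk
      have : 0 ≤ b ^ m := by positivity
      linarith
    · have : b ^ k ≤ 1 := pow_le_one₀ hb0 h
      linarith
  set P : ℝ := (4 * m : ℝ) ^ N with hP
  have hP1 : 1 ≤ P := one_le_pow₀ (by linarith)
  have hG : ∀ k < m, |ucpG N x (k + 1) y| ≤ 64 * P * b ^ m := by
    intro k hk
    have h1 := ucpG_bound (N := N) hx0 hx2 hy1 hy2 (κ := 1 - 1 / (4 * m)) (by linarith) (by linarith) k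
    have e1 : (1 - (1 - 1 / (4 * (m : ℝ))))⁻¹ = 4 * m := by
      field_simp; ring
    rw [e1, ← hbdef, ← hP, div_pow] at h1
    have h2 := ucp_kappa_pow hm hk.le
    have h3 : b ^ k / (1 - 1 / (4 * (m : ℝ))) ^ k ≤ 4 * b ^ m := by
      rw [div_le_iff₀ (by linarith)]
      have := hbk k hk.le
      have h5 : 0 ≤ b ^ m := by positivity
      nlinarith
    have h4 : |ucpG N x (k + 1) y| ≤ ((k : ℝ) + 1) * |ucpG N x (k + 1) y| := by
      have : (0 : ℝ) ≤ k := by positivity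
      nlinarith [abs_nonneg (ucpG N x (k + 1) y)]
    have h5 := mul_le_mul_of_nonneg_left h3 (show (0 : ℝ) ≤ 16 * P by linarith)
    linarith
  have hsum : |∑ k ∈ Finset.range m, ucpG N x (k + 1) y| ≤ 16 * (4 * m : ℝ) ^ (N + 1) * b ^ m := by
    refine (Finset.abs_sum_le_sum_abs _ _).trans ?_
    refine (Finset.sum_le_sum (fun k hk => hG k (Finset.mem_range.1 hk))).trans ?_
    rw [Finset.sum_const, Finset.card_range, nsmul_eq_mul, pow_succ, ← hP]
    apply le_of_eq; ring
  have hy0 : 0 < ‖y‖ := by linarith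
  have hG0 : |ucpG N x 0 y| ≤ 10 := by
    have hle := ucpF_le N hN (s := ‖y‖ ^ 2) (by positivity) (by nlinarith)
    have hnn := ucpF_nonneg N (s := ‖y‖ ^ 2) (by positivity) (by nlinarith)
    have h3 : (‖y‖ ^ 2) ^ ((1 - (N : ℝ)) / 2) ≤ 1 := by
      apply Real.rpow_le_one_of_one_le_of_nonpos
      · nlinarith
      · have : (1 : ℝ) ≤ N := by exact_mod_cast hN
        linarith
    change |ucpF N (‖y‖ ^ 2)| ≤ 10
    rw [abs_of_nonneg hnn]; linarith
  have hxy0 : 0 < ‖y - x‖ := norm_pos_iff.2 (sub_ne_zero.2 hxy.symm)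
  have hF := ucpF_nonneg N (s := ‖y - x‖ ^ 2) (by positivity) (by
    have := norm_sub_le y x
    nlinarith)
  set Fv := ucpF N (‖y - x‖ ^ 2)
  rw [Finset.sum_range_succ']
  have e : (4 * m : ℝ) ^ (N + 1) = P * (4 * m) := pow_succ _ _
  have hQ : 1 ≤ (4 * m : ℝ) ^ (N + 1) := one_le_pow₀ (by linarith)
  set Q := (4 * m : ℝ) ^ (N + 1)
  have t1 : |Fv - (∑ k ∈ Finset.range m, ucpG N x (k + 1) y + ucpG N x 0 y)| ≤ Fv + 16 * Q * b ^ m + 10 := by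
    have := abs_le.1 hsum
    have := abs_le.1 hG0
    rw [abs_le]; constructor <;> linarith [this.1, this.2]
  refine t1.trans ?_
  have hQb : 1 / 2 ≤ Q * b ^ m := by nlinarith
  have : 84 * Q * b ^ m * (1 + Fv) = 84 * (Q * b ^ m) + 84 * ((Q * b ^ m) * Fv) := by ring
  rw [this]
  have : 1 / 2 * Fv ≤ (Q * b ^ m) * Fv := mul_le_mul_of_nonneg_right hQb hF
  linarith

/-- The remainder of the Taylor expansion when `‖x‖ / ‖y‖ < 1 - 1 / (2 m)`: the series of the derivative in `t`
has a geometric tail, which is integrated over `0 ≤ t ≤ 1`. -/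
theorem ucp_kernel_far {x y : EuclideanSpace ℝ (Fin N)} (hx0 : x ≠ 0) (hx2 : ‖x‖ ≤ 2) (hy1 : 1 ≤ ‖y‖)
    (hy2 : ‖y‖ ≤ 2) {m : ℕ} (hm : 1 ≤ m) (hb : ‖x‖ / ‖y‖ < 1 - 1 / (2 * (m : ℝ))) :
    |ucpF N (‖y - x‖ ^ 2) - ∑ k ∈ Finset.range (m + 1), ucpG N x k y| ≤
      32 * (4 * m : ℝ) ^ (N + 1) * (‖x‖ / ‖y‖) ^ m := by
  have hm' : (1 : ℝ) ≤ m := by exact_mod_cast hm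
  have hy : y ≠ 0 := fun h => by simp [h] at hy1; linarith
  set b := ‖x‖ / ‖y‖ with hbdef
  have hb0 : 0 ≤ b := by positivity
  have h0'' : 0 < 1 / (4 * (m : ℝ)) := by positivity
  have h0' : 1 / (4 * (m : ℝ)) ≤ 1 / 4 := by
    apply one_div_le_one_div_of_le <;> linarith
  have h2m : 1 / (2 * (m : ℝ)) = 2 * (1 / (4 * (m : ℝ))) := by field_simp; norm_num
  set δ := 1 / (4 * (m : ℝ)) with hδ
  have hb1 : b < 1 := by linarith
  set P : ℝ := (4 * m : ℝ) ^ N with hP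
  have hP1 : 1 ≤ P := one_le_pow₀ (by linarith)
  set a := b / (1 - δ) with ha
  have ha0 : 0 ≤ a := div_nonneg hb0 (by linarith)
  have ha1 : a ≤ 1 - δ := by
    rw [ha, div_le_iff₀ (by linarith)]; nlinarith
  have hG : ∀ k : ℕ, ((k : ℝ) + 1) * |ucpG N x (k + 1) y| ≤ 16 * P * a ^ k := by
    intro k
    have h1 := ucpG_bound (N := N) hx0 hx2 hy1 hy2 (κ := 1 - δ) (by linarith) (by linarith) k
    have e1 : (1 - (1 - δ))⁻¹ = 4 * m := by
      rw [hδ]; field_simp; ring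
    rwa [e1, ← hbdef, ← hP] at h1
  have hline : ∀ t ∈ Icc (0 : ℝ) 1, |t| * b < 1 := by
    intro t ht
    rw [abs_of_nonneg ht.1]
    nlinarith [ht.1, ht.2]
  have hderiv : ∀ t ∈ Icc (0 : ℝ) 1, HasDerivWithinAt
      (fun t : ℝ => ucpG N x 0 (y - t • x) - ∑ k ∈ Finset.range (m + 1), ucpG N x k y * t ^ k)
      (ucpG N x 1 (y - t • x) - ∑ k ∈ Finset.range m, ((k : ℝ) + 1) * ucpG N x (k + 1) y * t ^ k)
      (Icc 0 1) t := by
    intro t ht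
    apply HasDerivAt.hasDerivWithinAt
    have d1 := ucpG_line_hasDerivAt x y 0 (ucp_line_ne_zero hy (hline t ht))
    have d2 : HasDerivAt (fun t : ℝ => ∑ k ∈ Finset.range (m + 1), ucpG N x k y * t ^ k)
        (∑ k ∈ Finset.range (m + 1), ucpG N x k y * (k * t ^ (k - 1))) t :=
      HasDerivAt.fun_sum (fun k _ => (hasDerivAt_pow k t).const_mul _)
    have d3 := d1.sub d2
    refine d3.congr_deriv ?_
    rw [Finset.sum_range_succ']
    simp only [Nat.cast_zero, zero_add, one_mul, zero_mul, mul_zero, add_zero, Nat.add_sub_cancel]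
    congr 1
    apply Finset.sum_congr rfl
    intro k _
    push_cast
    ring
  have hbd : ∀ t ∈ Ico (0 : ℝ) 1, ‖ucpG N x 1 (y - t • x) -
      ∑ k ∈ Finset.range m, ((k : ℝ) + 1) * ucpG N x (k + 1) y * t ^ k‖ ≤ 16 * P * a ^ m / (1 - a) := by
    intro t ht
    rw [norm_sub_rev]
    refine norm_sub_le_of_geometric_bound_of_hasSum (by linarith) (fun k => ?_)
      (ucpG_hasSum hx0 hy (hline t ⟨ht.1, ht.2.le⟩)) m
    rw [Real.norm_eq_abs, abs_mul, abs_mul, abs_pow, abs_of_nonneg (show (0 : ℝ) ≤ (k : ℝ) + 1 by positivity)]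
    have h1 : |t| ^ k ≤ 1 := pow_le_one₀ (abs_nonneg _) (by rw [abs_of_nonneg ht.1]; exact ht.2.le)
    have h2 : 0 ≤ ((k : ℝ) + 1) * |ucpG N x (k + 1) y| := by positivity
    have := hG k
    nlinarith
  have key := norm_image_sub_le_of_norm_deriv_le_segment_01' hderiv hbd
  have z1 : ucpG N x 0 (y - (0 : ℝ) • x) - ∑ k ∈ Finset.range (m + 1), ucpG N x k y * (0 : ℝ) ^ k = 0 := by
    rw [Finset.sum_range_succ']
    simp
  have z2 : ∑ k ∈ Finset.range (m + 1), ucpG N x k y * (1 : ℝ) ^ k = ∑ k ∈ Finset.range (m + 1), ucpG N x k y := by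
    simp
  simp only [z1, z2, sub_zero, one_smul, Real.norm_eq_abs] at key
  refine key.trans ?_
  have hk := ucp_kappa_pow hm le_rfl
  rw [← hδ] at hk
  have ham : a ^ m ≤ 2 * b ^ m := by
    rw [ha, div_pow, div_le_iff₀ (by linarith)]
    have : 0 ≤ b ^ m := by positivity
    nlinarith
  have h3 : 16 * P * a ^ m / (1 - a) ≤ 16 * P * a ^ m * (4 * m) := by
    have : (1 - a)⁻¹ ≤ 4 * m := by
      have : δ ≤ 1 - a := by linarith
      have h := inv_anti₀ h0'' this
      rw [hδ, one_div, inv_inv] at h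
      exact h
    rw [div_eq_mul_inv]
    exact mul_le_mul_of_nonneg_left this (by positivity)
  refine h3.trans ?_
  rw [pow_succ, ← hP]
  have h4 : 16 * P * a ^ m ≤ 16 * P * (2 * b ^ m) := mul_le_mul_of_nonneg_left ham (by positivity)
  have := mul_le_mul_of_nonneg_right h4 (show (0 : ℝ) ≤ 4 * m by positivity)
  linarith

/-- Subtracting the Taylor polynomial of degree `m` in `x` gains the factor `(‖x‖ / ‖y‖) ^ m`, also for
`‖x‖ > ‖y‖`, at the cost of a factor polynomial in `m`. -/
theorem ucp_kernel {x y : EuclideanSpace ℝ (Fin N)} (hN : 1 ≤ N) (hx0 : x ≠ 0) (hx2 : ‖x‖ ≤ 2) (hy1 : 1 ≤ ‖y‖)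
    (hy2 : ‖y‖ ≤ 2) (hxy : x ≠ y) {m : ℕ} (hm : 1 ≤ m) :
    |ucpF N (‖y - x‖ ^ 2) - ∑ k ∈ Finset.range (m + 1), ucpG N x k y| ≤
      84 * (4 * m : ℝ) ^ (N + 1) * (‖x‖ / ‖y‖) ^ m * (1 + ucpF N (‖y - x‖ ^ 2)) := by
  rcases le_or_gt (1 - 1 / (2 * (m : ℝ))) (‖x‖ / ‖y‖) with h | h
  · exact ucp_kernel_near hN hx0 hx2 hy1 hy2 hxy hm h
  · refine (ucp_kernel_far hx0 hx2 hy1 hy2 hm h).trans ?_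
    have hxy0 : 0 < ‖y - x‖ := norm_pos_iff.2 (sub_ne_zero.2 hxy.symm)
    have hF := ucpF_nonneg N (s := ‖y - x‖ ^ 2) (by positivity) (by
      have := norm_sub_le y x
      nlinarith)
    have : 0 ≤ (4 * m : ℝ) ^ (N + 1) * (‖x‖ / ‖y‖) ^ m := by positivity
    nlinarith

end kernel

/-! ### Approximate identity and integrability of the kernel -/

section carleman
variable {N : ℕ}

theorem ucp_phi_tendsto : Tendsto (fun x : EuclideanSpace ℝ (Fin N) => ‖x‖ ^ N *
    (1 + ‖x‖ ^ 2) ^ (-((N : ℝ) + 2) / 2)) (Bornology.cobounded _) (𝓝 0) := by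
  have h1 : Tendsto (fun x : EuclideanSpace ℝ (Fin N) => (1 + ‖x‖ ^ 2)⁻¹) (Bornology.cobounded _) (𝓝 0) := by
    apply tendsto_inv_atTop_zero.comp
    apply tendsto_atTop_add_const_left
    exact (tendsto_pow_atTop (by norm_num)).comp tendsto_norm_cobounded_atTop
  refine squeeze_zero (fun x => by positivity) (fun x => ?_) h1
  have hpos : 0 < 1 + ‖x‖ ^ 2 := by positivity
  have h2 : ‖x‖ ^ N ≤ (1 + ‖x‖ ^ 2) ^ ((N : ℝ) / 2) := by
    have : ‖x‖ ^ N = (‖x‖ ^ 2) ^ ((N : ℝ) / 2) := by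
      rw [← Real.rpow_natCast, ← Real.rpow_natCast, ← Real.rpow_mul (norm_nonneg _)]
      congr 1; push_cast; ring
    rw [this]
    exact Real.rpow_le_rpow (by positivity) (by linarith) (by positivity)
  calc _ ≤ (1 + ‖x‖ ^ 2) ^ ((N : ℝ) / 2) * (1 + ‖x‖ ^ 2) ^ (-((N : ℝ) + 2) / 2) :=
        mul_le_mul_of_nonneg_right h2 (by positivity)
    _ = _ := by
        rw [← Real.rpow_add hpos, ← Real.rpow_neg_one]
        congr 1; ring

/-- The functions `-Δ_y F(‖y - x‖² + μ)`, `μ = c⁻²`, are an approximate identity at `x` up to the factor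
`κ₀`. -/
theorem ucp_peak (hN : 1 ≤ N) : ∃ κ₀ : ℝ, 0 < κ₀ ∧ ∀ W : EuclideanSpace ℝ (Fin N) → ℝ, Continuous W →
    Integrable W → ∀ x, Tendsto (fun c : ℝ => ∫ y, (2 * N * (c ^ 2)⁻¹ *
      (‖y - x‖ ^ 2 + (c ^ 2)⁻¹) ^ (-((N : ℝ) + 2) / 2)) * W y) atTop (𝓝 (κ₀ * W x)) := by
  set φ : EuclideanSpace ℝ (Fin N) → ℝ := fun x => (1 + ‖x‖ ^ 2) ^ (-((N : ℝ) + 2) / 2) with hφ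
  have hφpos : ∀ x, 0 < φ x := fun x => by positivity
  have hφint : Integrable φ := integrable_rpow_neg_one_add_norm_sq (by simp)
  have hI : 0 < ∫ x, φ x := by
    rw [integral_pos_iff_support_of_nonneg (fun x => (hφpos x).le) hφint]
    have : Function.support φ = univ := by
      ext x; simp [(hφpos x).ne']
    rw [this]
    exact isOpen_univ.measure_pos _ univ_nonempty
  set I := ∫ x, φ x with hIdef
  have hN' : (0 : ℝ) < N := by exact_mod_cast hN
  refine ⟨2 * N * I, by positivity, fun W hW hWi x => ?_⟩
  have key := tendsto_integral_comp_smul_smul_of_integrable' (μ := volume) (φ := fun x => I⁻¹ * φ x)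
    (fun x => by have := hφpos x; positivity)
    (by rw [integral_const_mul]; exact inv_mul_cancel₀ hI.ne')
    (by
      have := (ucp_phi_tendsto (N := N)).const_mul I⁻¹
      rw [mul_zero] at this
      refine this.congr fun x => ?_
      simp only [finrank_euclideanSpace, Fintype.card_fin, hφ]
      ring) hWi (hW.continuousAt (x := x))
  have key2 := key.const_mul (2 * N * I)
  refine key2.congr' ?_
  filter_upwards [eventually_gt_atTop 0] with c hc
  rw [← integral_const_mul]
  congr 1
  funext y
  simp only [finrank_euclideanSpace, Fintype.card_fin, hφ, smul_eq_mul]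
  have e1 : ‖y - x‖ ^ 2 + (c ^ 2)⁻¹ = (c ^ 2)⁻¹ * (1 + ‖c • (x - y)‖ ^ 2) := by
    rw [norm_smul, Real.norm_eq_abs, mul_pow, sq_abs, norm_sub_rev]
    field_simp
    ring
  have e2 : ((c ^ 2)⁻¹) ^ (-((N : ℝ) + 2) / 2) = c ^ 2 * c ^ N := by
    rw [← Real.rpow_natCast, ← Real.rpow_neg hc.le, ← Real.rpow_mul hc.le, ← Real.rpow_natCast,
      ← Real.rpow_add hc]
    congr 1; push_cast; ring
  rw [e1, Real.mul_rpow (by positivity) (by positivity), e2]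
  field_simp

/-- The smoothed fundamental solution with pole `0`, truncated to the ball of radius `4`. For `μ = 0` it is the
fundamental solution itself; its value at `z = 0` is then meaningless, but a point has measure zero. -/
noncomputable def ucpCut (N : ℕ) (μ : ℝ) : EuclideanSpace ℝ (Fin N) → ℝ :=
  (closedBall 0 4).indicator fun z => ucpF N (‖z‖ ^ 2 + μ)

theorem ucpCut_integrable_zero (hN : 1 ≤ N) : Integrable (ucpCut N 0) := by
  have : NeZero N := ⟨by omega⟩
  have h1 : ucpCut N 0 = fun z => ((Iic 4).indicator (fun r : ℝ => ucpF N (r ^ 2))) ‖z‖ := by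
    funext z
    simp only [ucpCut, indicator, mem_closedBall_zero_iff, mem_Iic, add_zero]
  rw [h1, integrable_fun_norm_addHaar volume (f := (Iic 4).indicator (fun r : ℝ => ucpF N (r ^ 2)))]
  simp only [finrank_euclideanSpace, Fintype.card_fin]
  have h2 : IntegrableOn (fun r : ℝ => r ^ (N - 1) • ucpF N (r ^ 2)) (Ioc 0 4) := by
    have hfin : IsFiniteMeasure (volume.restrict (Ioc (0 : ℝ) 4)) := ⟨by simp⟩
    refine Integrable.of_bound ?_ 10 ?_
    · apply ContinuousOn.aestronglyMeasurable _ measurableSet_Ioc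
      apply ContinuousOn.fun_smul (by fun_prop)
      refine (ucpF_contDiffOn N).continuousOn.comp (by fun_prop) ?_
      intro r hr
      exact pow_pos hr.1 2
    · refine (ae_restrict_iff' measurableSet_Ioc).2 (Eventually.of_forall fun r hr => ?_)
      have hr2 : r ^ 2 ≤ 20 := by nlinarith [hr.1, hr.2]
      have hr0 : 0 < r ^ 2 := pow_pos hr.1 2
      have hle := ucpF_le N hN hr0 hr2
      have hnn := ucpF_nonneg N hr0 hr2
      have hp : 0 ≤ r ^ (N - 1) := pow_nonneg hr.1.le _
      rw [smul_eq_mul, Real.norm_eq_abs, abs_of_nonneg (mul_nonneg hp hnn)]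
      refine (mul_le_mul_of_nonneg_left hle hp).trans (le_of_eq ?_)
      have : (r ^ 2) ^ ((1 - (N : ℝ)) / 2) = (r ^ (N - 1))⁻¹ := by
        rw [← Real.rpow_natCast, ← Real.rpow_natCast, ← Real.rpow_mul hr.1.le, ← Real.rpow_neg hr.1.le]
        congr 1
        rw [Nat.cast_sub hN]; push_cast; ring
      rw [this]
      have := (pow_pos hr.1 (N - 1)).ne'
      field_simp
  have h3 := (integrable_indicator_iff measurableSet_Ioc).2 h2
  refine h3.integrableOn.congr_fun (fun r hr => ?_) measurableSet_Ioi
  by_cases h : r ≤ 4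
  · rw [indicator_of_mem (show r ∈ Ioc 0 4 from ⟨hr, h⟩), indicator_of_mem (show r ∈ Iic 4 from h)]
  · rw [indicator_of_notMem (fun h' => h h'.2), indicator_of_notMem (show r ∉ Iic 4 from h), smul_zero]

theorem ucpCut_le {μ : ℝ} (h0 : 0 ≤ μ) {z : EuclideanSpace ℝ (Fin N)} (hz : z ≠ 0) :
    ucpCut N μ z ≤ ucpCut N 0 z := by
  apply indicator_le_indicator
  have := norm_pos_iff.2 hz
  exact ucpF_anti N (by positivity) (by linarith)

theorem ucpCut_nonneg {μ : ℝ} (h0 : 0 < μ) (h1 : μ ≤ 1) (z : EuclideanSpace ℝ (Fin N)) :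
    0 ≤ ucpCut N μ z := by
  apply indicator_nonneg
  intro z hz
  rw [mem_closedBall_zero_iff] at hz
  exact ucpF_nonneg N (by positivity) (by nlinarith [norm_nonneg z])

theorem ucpCut_measurable {μ : ℝ} (h0 : 0 < μ) :
    AEStronglyMeasurable (ucpCut N μ) (volume : Measure (EuclideanSpace ℝ (Fin N))) := by
  have hc : Continuous (fun z : EuclideanSpace ℝ (Fin N) => ucpF N (‖z‖ ^ 2 + μ)) := by
    refine (ucpF_contDiffOn N).continuousOn.comp_continuous (by fun_prop) fun z => ?_
    exact mem_Ioi.2 (by positivity)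
  exact hc.aestronglyMeasurable.indicator isClosed_closedBall.measurableSet

theorem ucp_ae_ne_zero (hN : 1 ≤ N) (x : EuclideanSpace ℝ (Fin N)) :
    ∀ᵐ z : EuclideanSpace ℝ (Fin N), z ≠ x := by
  have : NeZero N := ⟨by omega⟩
  rw [ae_iff]
  simp

theorem ucpCut_integrable (hN : 1 ≤ N) {μ : ℝ} (h0 : 0 < μ) (h1 : μ ≤ 1) :
    Integrable (ucpCut N μ) := by
  refine (ucpCut_integrable_zero hN).mono' (ucpCut_measurable h0) ?_
  filter_upwards [ucp_ae_ne_zero hN 0] with z hz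
  rw [Real.norm_eq_abs, abs_of_nonneg (ucpCut_nonneg h0 h1 z)]
  exact ucpCut_le h0.le hz

theorem ucpCut_tendsto (hN : 1 ≤ N) :
    Tendsto (fun c : ℝ => ∫ z, ucpCut N (c ^ 2)⁻¹ z) atTop (𝓝 (∫ z, ucpCut N 0 z)) := by
  have hlim : Tendsto (fun c : ℝ => (c ^ 2)⁻¹) atTop (𝓝 0) :=
    tendsto_inv_atTop_zero.comp (tendsto_pow_atTop (by norm_num))
  refine tendsto_integral_filter_of_dominated_convergence (ucpCut N 0) ?_ ?_ (ucpCut_integrable_zero hN) ?_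
  · filter_upwards [eventually_gt_atTop 0] with c hc using ucpCut_measurable (by positivity)
  · filter_upwards [eventually_ge_atTop 1] with c hc
    have h1 : (c ^ 2)⁻¹ ≤ 1 := inv_le_one_of_one_le₀ (by nlinarith)
    filter_upwards [ucp_ae_ne_zero hN 0] with z hz
    rw [Real.norm_eq_abs, abs_of_nonneg (ucpCut_nonneg (by positivity) h1 z)]
    exact ucpCut_le (by positivity) hz
  · filter_upwards [ucp_ae_ne_zero hN 0] with z hz
    by_cases h : z ∈ closedBall (0 : EuclideanSpace ℝ (Fin N)) 4
    · simp only [ucpCut, indicator_of_mem h]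
      have h2 : ContinuousAt (ucpF N) (‖z‖ ^ 2 + 0) := by
        have := norm_pos_iff.2 hz
        exact (ucpF_hasDerivAt N (by positivity)).continuousAt
      exact h2.tendsto.comp (hlim.const_add _)
    · simp [ucpCut, h]

end carleman

/-! ### The weighted estimate -/

section carleman2
variable {N : ℕ}

theorem ucp_exists_annulus_cutoff (N : ℕ) : ∃ χ : EuclideanSpace ℝ (Fin N) → ℝ, ContDiff ℝ ∞ χ ∧
    HasCompactSupport χ ∧ (∀ y, ‖y‖ < 1 / 4 → χ y = 0) ∧ (∀ y, 1 / 2 < ‖y‖ → ‖y‖ < 3 → χ y = 1) := by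
  let b1 : ContDiffBump (0 : EuclideanSpace ℝ (Fin N)) := ⟨3, 4, by norm_num, by norm_num⟩
  let b2 : ContDiffBump (0 : EuclideanSpace ℝ (Fin N)) := ⟨1 / 4, 1 / 2, by norm_num, by norm_num⟩
  refine ⟨fun y => b1 y - b2 y, b1.contDiff.sub b2.contDiff, b1.hasCompactSupport.sub b2.hasCompactSupport, ?_, ?_⟩
  · intro y hy
    have h1 : b1 y = 1 := b1.one_of_mem_closedBall (by
      rw [mem_closedBall_zero_iff]; change ‖y‖ ≤ 3; linarith)
    have h2 : b2 y = 1 := b2.one_of_mem_closedBall (by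
      rw [mem_closedBall_zero_iff]; change ‖y‖ ≤ 1 / 4; linarith)
    simp [h1, h2]
  · intro y hy hy'
    have h1 : b1 y = 1 := b1.one_of_mem_closedBall (by
      rw [mem_closedBall_zero_iff]; change ‖y‖ ≤ 3; linarith)
    have h2 : b2 y = 0 := b2.zero_of_le_dist (by
      rw [dist_zero_right]; change 1 / 2 ≤ ‖y‖; linarith)
    simp [h1, h2]

/-- The smoothed fundamental solution with pole `x` minus the Taylor polynomial of degree `m` in `x` of the
fundamental solution. -/
noncomputable def ucpK (N : ℕ) (x : EuclideanSpace ℝ (Fin N)) (m : ℕ) (μ : ℝ) (y : EuclideanSpace ℝ (Fin N)) : ℝ :=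
  ucpF N (‖y - x‖ ^ 2 + μ) + ∑ k ∈ Finset.range (m + 1), -1 * ucpG N x k y

theorem ucpLap_sum {ι : Type*} (s : Finset ι) (g : ι → EuclideanSpace ℝ (Fin N) → ℝ)
    {y : EuclideanSpace ℝ (Fin N)} (h : ∀ i ∈ s, ContDiffAt ℝ 2 (g i) y) :
    ucpLap (fun z => ∑ i ∈ s, g i z) y = ∑ i ∈ s, ucpLap (g i) y := by
  classical
  induction s using Finset.induction_on with
  | empty =>
    have := congrFun (ucpLap_const_mul (N := N) (ψ := fun _ => 0) 0) y
    simpa using this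
  | insert a s ha ih =>
    simp only [Finset.sum_insert ha]
    rw [ucpLap_add (h a (Finset.mem_insert_self _ _))
      (ContDiffAt.sum fun i hi => h i (Finset.mem_insert_of_mem hi)),
      ih fun i hi => h i (Finset.mem_insert_of_mem hi)]

theorem ucpK_contDiffAt (x : EuclideanSpace ℝ (Fin N)) (m : ℕ) {μ : ℝ} (hμ : 0 < μ)
    {y : EuclideanSpace ℝ (Fin N)} (hy : y ≠ 0) : ContDiffAt ℝ ∞ (ucpK N x m μ) y := by
  refine (ucpF_comp_contDiffAt (by positivity)).add (ContDiffAt.sum fun k _ => ?_)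
  exact contDiffAt_const.mul ((ucpG_contDiffOn x k).contDiffAt (isOpen_compl_singleton.mem_nhds hy))

theorem ucpLap_ucpK (x : EuclideanSpace ℝ (Fin N)) (m : ℕ) {μ : ℝ} (hμ : 0 < μ)
    {y : EuclideanSpace ℝ (Fin N)} (hy : y ≠ 0) : ucpLap (ucpK N x m μ) y =
      -(2 * N * μ * (‖y - x‖ ^ 2 + μ) ^ (-((N : ℝ) + 2) / 2)) := by
  have hG : ∀ k, ContDiffAt ℝ 2 (fun z => -1 * ucpG N x k z) y := fun k =>
    contDiffAt_const.mul (((ucpG_contDiffOn x k).contDiffAt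
      (isOpen_compl_singleton.mem_nhds hy)).of_le ENat.LEInfty.out)
  have := ucpLap_add (ψ := fun y => ucpF N (‖y - x‖ ^ 2 + μ))
    (φ := fun y => ∑ k ∈ Finset.range (m + 1), -1 * ucpG N x k y) (y := y)
    ((ucpF_comp_contDiffAt (by positivity)).of_le ENat.LEInfty.out)
    (ContDiffAt.sum fun k _ => hG k)
  change ucpLap (fun y => ucpF N (‖y - x‖ ^ 2 + μ) + ∑ k ∈ Finset.range (m + 1), -1 * ucpG N x k y) y = _
  rw [this, ucpLap_F_comp (by positivity), ucpLap_sum _ _ (fun k _ => hG k)]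
  simp only [ucpLap_const_mul, ucpLap_ucpG x _ y hy]
  simp

/-- A weighted estimate with only polynomial loss in `m`: if `ΔW = f` weakly, both are supported in the annulus
`1 ≤ ‖y‖ ≤ 2`, and `|f| ≤ T ‖y‖ ^ m`, then `|W| ≤ A m ^ (N + 1) T ‖x‖ ^ m`. The weak equation is tested with
the subtracted kernel, whose correction terms are harmonic on the annulus, and `μ → 0`. -/
theorem ucp_carleman (hN : 1 ≤ N) : ∃ A : ℝ, 0 < A ∧ ∀ W f : EuclideanSpace ℝ (Fin N) → ℝ, Continuous W →
    (∀ y, ¬ (1 ≤ ‖y‖ ∧ ‖y‖ ≤ 2) → W y = 0 ∧ f y = 0) →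
    (∀ ψ : EuclideanSpace ℝ (Fin N) → ℝ, ContDiff ℝ ∞ ψ → HasCompactSupport ψ →
      ∫ y, W y * ucpLap ψ y = ∫ y, f y * ψ y) →
    ∀ m : ℕ, 1 ≤ m → ∀ T : ℝ, 0 ≤ T → (∀ y, |f y| ≤ T * ‖y‖ ^ m) →
      ∀ x, |W x| ≤ A * (m : ℝ) ^ (N + 1) * T * ‖x‖ ^ m := by
  obtain ⟨κ₀, hκ₀, hpeak⟩ := ucp_peak hN
  set B : EuclideanSpace ℝ (Fin N) → ℝ := (closedBall 0 4).indicator fun _ => 1 with hB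
  have hBint : Integrable B := (integrable_indicator_iff isClosed_closedBall.measurableSet).2
    (integrableOn_const (isCompact_closedBall _ _).measure_ne_top)
  have hHint := ucpCut_integrable_zero hN
  set I := ∫ z, (B z + ucpCut N 0 z) with hI
  have hInn : 0 ≤ I := by
    apply integral_nonneg_of_ae
    filter_upwards [ucp_ae_ne_zero hN 0] with z hz
    have h1 : 0 ≤ B z := indicator_nonneg (fun _ _ => zero_le_one) _
    have h2 : 0 ≤ ucpCut N 0 z := (ucpCut_nonneg one_pos le_rfl z).trans (ucpCut_le zero_le_one hz)
    exact add_nonneg h1 h2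
  refine ⟨(84 * 4 ^ (N + 1) * I + 1) / κ₀, by positivity, ?_⟩
  intro W f hW hsupp hweak m hm T hT hf x
  by_cases hx : ¬ (1 ≤ ‖x‖ ∧ ‖x‖ ≤ 2)
  · rw [(hsupp x hx).1, abs_zero]; positivity
  push Not at hx
  have hx0 : x ≠ 0 := fun h => by
    have := hx.1
    simp [h] at this
    linarith
  have hWcs : HasCompactSupport W := by
    refine HasCompactSupport.intro (isCompact_closedBall (0 : EuclideanSpace ℝ (Fin N)) 2) fun y hy => ?_
    refine (hsupp y fun h => hy ?_).1
    rw [mem_closedBall_zero_iff]; exact h.2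
  have hWint : Integrable W := hW.integrable_of_hasCompactSupport hWcs
  have hlim := (hpeak W hW hWint x).abs
  set L : ℝ := 84 * (4 * m : ℝ) ^ (N + 1) * ‖x‖ ^ m with hL
  -- the left-hand side is the weak equation tested with the subtracted kernel for `μ = c⁻²`; the error made by
  -- smoothing the kernel is controlled by the difference of the two integrals of `ucpCut`
  have hrep : ∀ c : ℝ, 1 ≤ c → |∫ y, (2 * N * (c ^ 2)⁻¹ *
      (‖y - x‖ ^ 2 + (c ^ 2)⁻¹) ^ (-((N : ℝ) + 2) / 2)) * W y| ≤
      T * (L * I + 2 ^ m * ((∫ z, ucpCut N 0 z) - ∫ z, ucpCut N (c ^ 2)⁻¹ z)) := by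
    intro c hc
    set μ := (c ^ 2)⁻¹ with hμdef
    have hμ : 0 < μ := by positivity
    have hμ1 : μ ≤ 1 := inv_le_one_of_one_le₀ (by nlinarith)
    obtain ⟨χ, hχ, hχc, hχ0, hχ1⟩ := ucp_exists_annulus_cutoff N
    have hψ : ContDiff ℝ ∞ (fun y => χ y * ucpK N x m μ y) := by
      rw [contDiff_iff_contDiffAt]
      intro y
      by_cases hy : y = 0
      · have : (fun y => χ y * ucpK N x m μ y) =ᶠ[𝓝 y] fun _ => 0 := by
          filter_upwards [ball_mem_nhds y (show (0 : ℝ) < 1 / 4 by norm_num)] with z hz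
          rw [hy, mem_ball_zero_iff] at hz
          rw [hχ0 z hz, zero_mul]
        exact contDiffAt_const.congr_of_eventuallyEq this
      · exact hχ.contDiffAt.mul (ucpK_contDiffAt x m hμ hy)
    have h := hweak _ hψ (hχc.mul_right)
    have e1 : ∫ y, (2 * N * μ * (‖y - x‖ ^ 2 + μ) ^ (-((N : ℝ) + 2) / 2)) * W y
        = - ∫ y, W y * ucpLap (fun y => χ y * ucpK N x m μ y) y := by
      rw [← integral_neg]
      congr 1
      funext y
      by_cases hy : 1 ≤ ‖y‖ ∧ ‖y‖ ≤ 2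
      · have hy0 : y ≠ 0 := fun h => by
          have := hy.1
          simp [h] at this
          linarith
        have hev : (fun y => χ y * ucpK N x m μ y) =ᶠ[𝓝 y] ucpK N x m μ := by
          have h1 : ∀ᶠ z in 𝓝 y, 1 / 2 < ‖z‖ := continuous_norm.continuousAt.eventually (lt_mem_nhds (by linarith))
          have h2 : ∀ᶠ z in 𝓝 y, ‖z‖ < 3 := continuous_norm.continuousAt.eventually (gt_mem_nhds (by linarith))
          filter_upwards [h1, h2] with z h1 h2
          rw [hχ1 z h1 h2, one_mul]
        rw [(ucpLap_congr hev).eq_of_nhds, ucpLap_ucpK x m hμ hy0]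
        ring
      · rw [(hsupp y hy).1]; simp
    rw [e1, abs_neg, h, ← Real.norm_eq_abs]
    have hbint : Integrable fun y : EuclideanSpace ℝ (Fin N) => T * (L * (B (y - x) + ucpCut N 0 (y - x)) +
        2 ^ m * (ucpCut N 0 (y - x) - ucpCut N μ (y - x))) := by
      have h0 := hHint.comp_sub_right x
      have h1 := (ucpCut_integrable hN hμ hμ1).comp_sub_right x
      have h2 := hBint.comp_sub_right x
      exact (((h2.add h0).const_mul L).add ((h0.sub h1).const_mul _)).const_mul T
    have hle : ∀ᵐ y : EuclideanSpace ℝ (Fin N), ‖f y * (χ y * ucpK N x m μ y)‖ ≤ T * (L * (B (y - x) + ucpCut N 0 (y - x)) +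
        2 ^ m * (ucpCut N 0 (y - x) - ucpCut N μ (y - x))) := by
      filter_upwards [ucp_ae_ne_zero hN x] with y hyx
      have hyx' : y - x ≠ 0 := sub_ne_zero.2 hyx
      by_cases hy : 1 ≤ ‖y‖ ∧ ‖y‖ ≤ 2
      · have hmem : y - x ∈ closedBall (0 : EuclideanSpace ℝ (Fin N)) 4 := by
          rw [mem_closedBall_zero_iff]
          have := norm_sub_le y x
          linarith [hy.2, hx.2]
        have hyx0 := norm_pos_iff.2 hyx'
        have hker := ucp_kernel hN hx0 hx.2 hy.1 hy.2 hyx.symm hm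
        have hF : ucpF N (‖y - x‖ ^ 2 + μ) ≤ ucpF N (‖y - x‖ ^ 2) := ucpF_anti N (by positivity) (by linarith)
        simp only [hB, ucpCut, indicator_of_mem hmem, add_zero]
        rw [hχ1 y (by linarith [hy.1]) (by linarith [hy.2]), one_mul, norm_mul, Real.norm_eq_abs, Real.norm_eq_abs]
        have hK : |ucpK N x m μ y| ≤ 84 * (4 * m : ℝ) ^ (N + 1) * (‖x‖ / ‖y‖) ^ m * (1 + ucpF N (‖y - x‖ ^ 2))
            + (ucpF N (‖y - x‖ ^ 2) - ucpF N (‖y - x‖ ^ 2 + μ)) := by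
          have e : ucpK N x m μ y = (ucpF N (‖y - x‖ ^ 2) - ∑ k ∈ Finset.range (m + 1), ucpG N x k y) -
              (ucpF N (‖y - x‖ ^ 2) - ucpF N (‖y - x‖ ^ 2 + μ)) := by
            simp only [ucpK, neg_mul, one_mul, Finset.sum_neg_distrib]; ring
          rw [e]
          refine (abs_sub _ _).trans (add_le_add hker (le_of_eq (abs_of_nonneg (by linarith))))
        have hy0 : 0 < ‖y‖ := by linarith [hy.1]
        have hym : ‖y‖ ^ m ≤ 2 ^ m := pow_le_pow_left₀ hy0.le hy.2 _
        have := mul_le_mul (hf y) hK (abs_nonneg _) (by positivity)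
        refine this.trans ?_
        rw [mul_assoc]
        apply mul_le_mul_of_nonneg_left _ hT
        rw [mul_add]
        apply add_le_add
        · apply le_of_eq
          rw [hL, div_pow]
          have := (pow_pos hy0 m).ne'
          field_simp
        · exact mul_le_mul_of_nonneg_right hym (by linarith)
      · rw [(hsupp y hy).2, zero_mul, norm_zero]
        have h1 : 0 ≤ B (y - x) := indicator_nonneg (fun _ _ => zero_le_one) _
        have h2 := ucpCut_le (N := N) hμ.le hyx'
        have h3 := ucpCut_nonneg (N := N) hμ hμ1 (y - x)
        have h4 : 0 ≤ ucpCut N 0 (y - x) := h3.trans h2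
        have h5 : 0 ≤ ucpCut N 0 (y - x) - ucpCut N μ (y - x) := by linarith
        positivity
    refine (norm_integral_le_of_norm_le hbint hle).trans (le_of_eq ?_)
    have i1 : Integrable fun z => L * (B z + ucpCut N 0 z) := (hBint.add hHint).const_mul L
    have i2 : Integrable fun z => (2 : ℝ) ^ m * (ucpCut N 0 z - ucpCut N μ z) :=
      (hHint.sub (ucpCut_integrable hN hμ hμ1)).const_mul _
    rw [integral_sub_right_eq_self (fun z => T * (L * (B z + ucpCut N 0 z) + 2 ^ m * (ucpCut N 0 z - ucpCut N μ z))) x,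
      integral_const_mul, integral_add i1 i2, integral_const_mul, integral_const_mul,
      integral_sub hHint (ucpCut_integrable hN hμ hμ1)]
  have hlim2 : Tendsto (fun c : ℝ => T * (L * I + 2 ^ m * ((∫ z, ucpCut N 0 z) - ∫ z, ucpCut N (c ^ 2)⁻¹ z)))
      atTop (𝓝 (T * (L * I + 2 ^ m * ((∫ z, ucpCut N 0 z) - ∫ z, ucpCut N 0 z)))) :=
    ((((ucpCut_tendsto hN).const_sub _).const_mul _).const_add _).const_mul _
  have hfin := le_of_tendsto_of_tendsto hlim hlim2 (by
    filter_upwards [eventually_ge_atTop 1] with c hc using hrep c hc)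
  rw [sub_self, mul_zero, add_zero, abs_mul, abs_of_pos hκ₀] at hfin
  have e : (84 * 4 ^ (N + 1) * I + 1) / κ₀ * (m : ℝ) ^ (N + 1) * T * ‖x‖ ^ m =
      (T * (L * I) + (m : ℝ) ^ (N + 1) * T * ‖x‖ ^ m) / κ₀ := by
    rw [hL, mul_pow]; field_simp
  rw [e, le_div_iff₀ hκ₀]
  have : 0 ≤ (m : ℝ) ^ (N + 1) * T * ‖x‖ ^ m := by positivity
  linarith

end carleman2

/-! ### Extension by zero and the Green identity -/

section green
variable {N : ℕ} {c : EuclideanSpace ℝ (Fin N)} {R : ℝ}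

theorem ucp_uniqueDiffOn (c : EuclideanSpace ℝ (Fin N)) (hR : 0 < R) : UniqueDiffOn ℝ (closedBall c R) := by
  apply uniqueDiffOn_convex (convex_closedBall c R)
  rw [interior_closedBall c hR.ne']
  exact nonempty_ball.2 hR

theorem ucp_closedBall_mem_nhds {y : EuclideanSpace ℝ (Fin N)} (hy : y ∈ ball c R) : closedBall c R ∈ 𝓝 y :=
  mem_of_superset (isOpen_ball.mem_nhds hy) ball_subset_closedBall

/-- The extension by zero of a `C¹` function on a closed ball that vanishes on the sphere is Lipschitz. -/
theorem ucp_ext_lipschitz (hR : 0 < R) {φ : EuclideanSpace ℝ (Fin N) → ℝ}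
    (hφ : ContDiffOn ℝ 1 φ (closedBall c R)) (h0 : ∀ y ∈ sphere c R, φ y = 0) :
    ∃ K, LipschitzWith K ((closedBall c R).indicator φ) := by
  have hcont : ContinuousOn (fderivWithin ℝ φ (closedBall c R)) (closedBall c R) :=
    hφ.continuousOn_fderivWithin (ucp_uniqueDiffOn c hR) le_rfl
  obtain ⟨M, hM⟩ := (isCompact_closedBall c R).exists_bound_of_continuousOn hcont
  have hL : LipschitzOnWith M.toNNReal φ (closedBall c R) :=
    (convex_closedBall c R).lipschitzOnWith_of_nnnorm_fderivWithin_le (hφ.differentiableOn (by simp))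
      fun x hx => by
        rw [← NNReal.coe_le_coe, coe_nnnorm]
        exact (hM x hx).trans (Real.le_coe_toNNReal M)
  have key : ∀ x ∈ closedBall c R, ∀ y ∉ closedBall c R, dist (φ x) 0 ≤ M.toNNReal * dist x y := by
    intro x hx y hy
    have hcont : ContinuousOn (fun t : ℝ => dist (x + t • (y - x)) c) (Icc 0 1) := by fun_prop
    have hmem : R ∈ Icc (dist (x + (0 : ℝ) • (y - x)) c) (dist (x + (1 : ℝ) • (y - x)) c) := by
      rw [mem_closedBall] at hx hy
      simp only [zero_smul, add_zero, one_smul, add_sub_cancel]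
      exact ⟨hx, (not_le.1 hy).le⟩
    obtain ⟨t, ht, htR⟩ := intermediate_value_Icc zero_le_one hcont hmem
    have hz : x + t • (y - x) ∈ sphere c R := htR
    have h1 := hL.dist_le_mul x hx _ (sphere_subset_closedBall hz)
    rw [h0 _ hz] at h1
    refine h1.trans (mul_le_mul_of_nonneg_left ?_ (NNReal.coe_nonneg _))
    rw [dist_eq_norm, dist_eq_norm, sub_add_cancel_left, norm_neg, norm_smul, norm_sub_rev x y, Real.norm_eq_abs,
      abs_of_nonneg ht.1]
    nlinarith [ht.1, ht.2, norm_nonneg (y - x)]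
  refine ⟨M.toNNReal, LipschitzWith.of_dist_le_mul fun x y => ?_⟩
  by_cases hx : x ∈ closedBall c R <;> by_cases hy : y ∈ closedBall c R
  · rw [indicator_of_mem hx, indicator_of_mem hy]
    exact hL.dist_le_mul x hx y hy
  · rw [indicator_of_mem hx, indicator_of_notMem hy]
    exact key x hx y hy
  · rw [indicator_of_notMem hx, indicator_of_mem hy, dist_comm, dist_comm x y]
    exact key y hy x hx
  · rw [indicator_of_notMem hx, indicator_of_notMem hy, dist_self]
    positivity

theorem ucp_ae_notMem_sphere (hR : 0 < R) : ∀ᵐ y : EuclideanSpace ℝ (Fin N), y ∉ sphere c R :=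
  measure_eq_zero_iff_ae_notMem.1 (Measure.addHaar_sphere_of_ne_zero volume c hR.ne')

theorem ucp_ext_lineDeriv (hR : 0 < R) {φ : EuclideanSpace ℝ (Fin N) → ℝ}
    (hφ : ContDiffOn ℝ 1 φ (closedBall c R)) (e : EuclideanSpace ℝ (Fin N)) :
    ∀ᵐ y, lineDeriv ℝ ((closedBall c R).indicator φ) y e = (ball c R).indicator (ucpD e φ) y := by
  filter_upwards [ucp_ae_notMem_sphere (c := c) hR] with y hy
  by_cases hyb : y ∈ ball c R
  · rw [indicator_of_mem hyb]
    have hev : (closedBall c R).indicator φ =ᶠ[𝓝 y] φ := by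
      filter_upwards [ucp_closedBall_mem_nhds hyb] with z hz
      rw [indicator_of_mem hz]
    rw [hev.lineDeriv_eq]
    exact DifferentiableAt.lineDeriv_eq_fderiv
      ((hφ.contDiffAt (ucp_closedBall_mem_nhds hyb)).differentiableAt (by simp))
  · rw [indicator_of_notMem hyb]
    have hyc : y ∉ closedBall c R := by
      rw [mem_sphere] at hy
      rw [mem_ball, not_lt] at hyb
      rw [mem_closedBall, not_le]
      exact lt_of_le_of_ne hyb (Ne.symm hy)
    have hev : (closedBall c R).indicator φ =ᶠ[𝓝 y] fun _ => 0 := by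
      filter_upwards [isClosed_closedBall.isOpen_compl.mem_nhds hyc] with z hz
      rw [indicator_of_notMem hz]
    rw [hev.lineDeriv_eq]
    simp [lineDeriv]

theorem ucp_lineDeriv_eq {ψ : EuclideanSpace ℝ (Fin N) → ℝ} (hψ : ContDiff ℝ ∞ ψ)
    (e y : EuclideanSpace ℝ (Fin N)) : lineDeriv ℝ ψ y e = ucpD e ψ y :=
  DifferentiableAt.lineDeriv_eq_fderiv (hψ.differentiable (by simp) y)

theorem ucpD_contDiff {ψ : EuclideanSpace ℝ (Fin N) → ℝ} (hψ : ContDiff ℝ ∞ ψ)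
    (e : EuclideanSpace ℝ (Fin N)) : ContDiff ℝ ∞ (ucpD e ψ) := by
  rw [← contDiffOn_univ] at hψ ⊢
  exact ucpD_contDiffOn isOpen_univ hψ e

theorem ucpD_hasCompactSupport {ψ : EuclideanSpace ℝ (Fin N) → ℝ} (hψ : HasCompactSupport ψ)
    (e : EuclideanSpace ℝ (Fin N)) : HasCompactSupport (ucpD e ψ) :=
  hψ.fderiv_apply ℝ e

/-- Integration by parts on a ball, without surface integrals: the extension by zero is Lipschitz, so the
formula for Lipschitz functions on the whole space applies to it. -/
theorem ucp_ext_parts (hR : 0 < R) {φ ψ : EuclideanSpace ℝ (Fin N) → ℝ}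
    (hφ : ContDiffOn ℝ 1 φ (closedBall c R)) (h0 : ∀ y ∈ sphere c R, φ y = 0)
    (hψ : ContDiff ℝ ∞ ψ) (hψc : HasCompactSupport ψ) (e : EuclideanSpace ℝ (Fin N)) :
    ∫ y, (ball c R).indicator (ucpD e φ) y * ψ y = - ∫ y, (closedBall c R).indicator φ y * ucpD e ψ y := by
  obtain ⟨K, hK⟩ := ucp_ext_lipschitz hR hφ h0
  obtain ⟨K', hK'⟩ := hψ.lipschitzWith_of_hasCompactSupport hψc (by simp)
  have h1 := hK.integral_lineDeriv_mul_eq (μ := volume) hK' hψc e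
  have h2 : ∫ y, lineDeriv ℝ ((closedBall c R).indicator φ) y e * ψ y =
      ∫ y, (ball c R).indicator (ucpD e φ) y * ψ y := by
    apply integral_congr_ae
    filter_upwards [ucp_ext_lineDeriv (c := c) hR hφ e] with y hy
    rw [hy]
  rw [← h2, h1, ← integral_neg]
  congr 1
  funext y
  rw [ucp_lineDeriv_eq hψ]
  simp only [ucpD, map_neg]
  ring

theorem ucp_ext_integrable (hR : 0 < R) {φ ψ : EuclideanSpace ℝ (Fin N) → ℝ}
    (hφ : ContDiffOn ℝ 1 φ (closedBall c R)) (h0 : ∀ y ∈ sphere c R, φ y = 0)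
    (hψ : ContDiff ℝ ∞ ψ) (hψc : HasCompactSupport ψ) (e : EuclideanSpace ℝ (Fin N)) :
    Integrable fun y => (ball c R).indicator (ucpD e φ) y * ψ y := by
  obtain ⟨K, hK⟩ := ucp_ext_lipschitz hR hφ h0
  have h1 := (hK.locallyIntegrable_lineDeriv (μ := volume) e).integrable_smul_right_of_hasCompactSupport
    hψ.continuous hψc
  refine h1.congr ?_
  filter_upwards [ucp_ext_lineDeriv (c := c) hR hφ e] with y hy
  rw [hy, smul_eq_mul]

/-- The Green identity for zero Cauchy data: the extension by zero of `w` has, in the weak sense, the extension by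
zero of `Δw` as its Laplacian. -/
theorem ucp_green (hR : 0 < R) {w ψ : EuclideanSpace ℝ (Fin N) → ℝ}
    (hw : ContDiffOn ℝ 2 w (closedBall c R)) (h0 : ∀ y ∈ sphere c R, w y = 0)
    (h1 : ∀ y ∈ sphere c R, fderivWithin ℝ w (closedBall c R) y = 0)
    (hψ : ContDiff ℝ ∞ ψ) (hψc : HasCompactSupport ψ) :
    ∫ y, (closedBall c R).indicator w y * ucpLap ψ y = ∫ y, (ball c R).indicator (ucpLap w) y * ψ y := by
  have hw1 : ContDiffOn ℝ 1 w (closedBall c R) := hw.of_le (by norm_num)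
  obtain ⟨K, hK⟩ := ucp_ext_lipschitz hR hw1 h0
  set g : Fin N → EuclideanSpace ℝ (Fin N) → ℝ := fun i y =>
    fderivWithin ℝ w (closedBall c R) y (EuclideanSpace.single i 1) with hg
  have hgC : ∀ i, ContDiffOn ℝ 1 (g i) (closedBall c R) := fun i =>
    (hw.fderivWithin (ucp_uniqueDiffOn c hR) (by norm_num)).clm_apply contDiffOn_const
  have hg0 : ∀ i, ∀ y ∈ sphere c R, g i y = 0 := fun i y hy => by simp [hg, h1 y hy]
  have hgD : ∀ i, ∀ y ∈ ball c R, g i y = ucpD (EuclideanSpace.single i 1) w y := fun i y hy => by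
    simp only [hg, ucpD]
    rw [fderivWithin_of_mem_nhds (ucp_closedBall_mem_nhds hy)]
  have hD : ∀ i, ContDiff ℝ ∞ (ucpD (EuclideanSpace.single i 1) ψ) := fun i => ucpD_contDiff hψ _
  have hDc : ∀ i, HasCompactSupport (ucpD (EuclideanSpace.single i 1) ψ) := fun i => ucpD_hasCompactSupport hψc _
  have step : ∀ i, ∫ y, (closedBall c R).indicator w y *
      ucpD (EuclideanSpace.single i 1) (ucpD (EuclideanSpace.single i 1) ψ) y =
      ∫ y, (ball c R).indicator (ucpD (EuclideanSpace.single i 1) (g i)) y * ψ y := by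
    intro i
    rw [ucp_ext_parts hR (hgC i) (hg0 i) hψ hψc]
    have := ucp_ext_parts hR hw1 h0 (hD i) (hDc i) (EuclideanSpace.single i 1)
    rw [eq_neg_iff_add_eq_zero, add_comm, ← eq_neg_iff_add_eq_zero] at this
    rw [this]
    congr 1
    apply integral_congr_ae
    filter_upwards [ucp_ae_notMem_sphere (c := c) hR] with y hy
    by_cases hyb : y ∈ ball c R
    · rw [indicator_of_mem hyb, indicator_of_mem (ball_subset_closedBall hyb), hgD i y hyb]
    · have hyc : y ∉ closedBall c R := by
        rw [mem_sphere] at hy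
        rw [mem_ball, not_lt] at hyb
        rw [mem_closedBall, not_le]
        exact lt_of_le_of_ne hyb (Ne.symm hy)
      rw [indicator_of_notMem hyb, indicator_of_notMem hyc]
  have e1 : ∀ y, (closedBall c R).indicator w y * ucpLap ψ y = ∑ i, (closedBall c R).indicator w y *
      ucpD (EuclideanSpace.single i 1) (ucpD (EuclideanSpace.single i 1) ψ) y := fun y => by
    rw [ucpLap, Finset.mul_sum]
  have e2 : ∀ y, (ball c R).indicator (ucpLap w) y * ψ y =
      ∑ i, (ball c R).indicator (ucpD (EuclideanSpace.single i 1) (g i)) y * ψ y := fun y => by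
    rw [← Finset.sum_mul]
    congr 1
    by_cases hyb : y ∈ ball c R
    · simp only [indicator_of_mem hyb, ucpLap]
      refine Finset.sum_congr rfl fun i _ => ?_
      have hev : g i =ᶠ[𝓝 y] ucpD (EuclideanSpace.single i 1) w := by
        filter_upwards [isOpen_ball.mem_nhds hyb] with z hz using hgD i z hz
      exact ((ucpD_congr hev _).eq_of_nhds).symm
    · simp [indicator_of_notMem hyb]
  simp only [e1, e2]
  rw [integral_finsetSum, integral_finsetSum]
  · exact Finset.sum_congr rfl fun i _ => step i
  · exact fun i _ => ucp_ext_integrable hR (hgC i) (hg0 i) hψ hψc _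
  · intro i _
    refine Continuous.integrable_of_hasCompactSupport (hK.continuous.mul (ucpD_contDiff (hD i) _).continuous) ?_
    exact (ucpD_hasCompactSupport (hDc i) _).mul_left

end green

/-! ### Abstract iteration -/

section iteration

/-- The self-improvement property driving the iteration, for a function `g` with weight `ν`: where `ν < r`,
bounds `g ≤ ε` and `g ≤ Z ν ^ n` imply an analogous bound in which `Z` is multiplied by `ε ^ δ` up to a term
`r⁻¹ ^ n` coming from the cutoff, with a loss polynomial in `n`. -/
def UcpStep {α : Type*} (B : ℝ) (K : ℕ) (δ : ℝ) (ν g : α → ℝ) : Prop :=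
  ∀ r : ℝ, 1 ≤ r → r ≤ 5 / 4 → ∀ n : ℕ, 1 ≤ n → ∀ ε : ℝ, 0 < ε → ε ≤ 1 → ∀ Z : ℝ, 0 ≤ Z →
    (∀ x, ν x < r → g x ≤ ε) → (∀ x, ν x < r → g x ≤ Z * ν x ^ n) →
    ∀ x, ν x < r → g x ≤ B * (n : ℝ) ^ K * max (ε ^ δ * Z) (r⁻¹ ^ n) * ν x ^ n

/-- If `ε ^ δ` beats the polynomial loss, repeating the step halves the `Z`-term each time and leaves only the
cutoff term. -/
theorem ucp_absorb {α : Type*} {B : ℝ} (hB : 1 ≤ B) {K : ℕ} {δ : ℝ} {ν g : α → ℝ}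
    (hν : ∀ x, 0 ≤ ν x) (hgν : ∀ x, g x = 0 ∨ 1 ≤ ν x) (hstep : UcpStep B K δ ν g) {r : ℝ} (hr1 : 1 ≤ r)
    (hr2 : r ≤ 5 / 4) {n : ℕ} (hn : 1 ≤ n) {ε : ℝ} (hε : 0 < ε) (hε1 : ε ≤ 1)
    (hsmall : B * (n : ℝ) ^ K * ε ^ δ ≤ 1 / 2) (hgε : ∀ x, ν x < r → g x ≤ ε) :
    ∀ x, ν x < r → g x ≤ B * (n : ℝ) ^ K * (ν x / r) ^ n := by
  have hr0 : 0 < r := by linarith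
  have hind : ∀ k : ℕ, ∀ x, ν x < r → g x ≤ max (ε * (1 / 2) ^ k) (B * (n : ℝ) ^ K * r⁻¹ ^ n) * ν x ^ n := by
    intro k
    induction k with
    | zero =>
      intro x hx
      have h0 := hν x
      have hm : ε ≤ max (ε * (1 / 2) ^ 0) (B * (n : ℝ) ^ K * r⁻¹ ^ n) := by simp
      rcases hgν x with h | h
      · rw [h]; positivity
      · have : 1 ≤ ν x ^ n := one_le_pow₀ h
        calc g x ≤ ε := hgε x hx
          _ ≤ max (ε * (1 / 2) ^ 0) (B * (n : ℝ) ^ K * r⁻¹ ^ n) * 1 := by rw [mul_one]; exact hm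
          _ ≤ _ := mul_le_mul_of_nonneg_left this (by positivity)
    | succ k ih =>
      intro x hx
      have h := hstep r hr1 hr2 n hn ε hε hε1 _ (by positivity) hgε ih x hx
      refine h.trans (mul_le_mul_of_nonneg_right ?_ (pow_nonneg (hν x) n))
      have hBn : 0 ≤ B * (n : ℝ) ^ K := by positivity
      rw [mul_max_of_nonneg _ _ hBn, ← mul_assoc]
      apply max_le _ (le_max_right _ _)
      have hq : 0 ≤ B * (n : ℝ) ^ K * r⁻¹ ^ n := by positivity
      refine (mul_le_mul_of_nonneg_right hsmall (by positivity)).trans ?_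
      rw [mul_max_of_nonneg _ _ (by norm_num)]
      apply max_le_max
      · rw [pow_succ]; apply le_of_eq; ring
      · linarith
  intro x hx
  have hlim : Tendsto (fun k : ℕ => max (ε * (1 / 2 : ℝ) ^ k) (B * (n : ℝ) ^ K * r⁻¹ ^ n) * ν x ^ n) atTop
      (𝓝 (max (ε * 0) (B * (n : ℝ) ^ K * r⁻¹ ^ n) * ν x ^ n)) :=
    (((tendsto_pow_atTop_nhds_zero_of_lt_one (by norm_num) (by norm_num)).const_mul ε).max
      tendsto_const_nhds).mul_const _
  have := ge_of_tendsto' hlim fun k => hind k x hx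
  rw [mul_zero, max_eq_right (by positivity)] at this
  refine this.trans (le_of_eq ?_)
  rw [div_eq_mul_inv, mul_pow]; ring

/-- A small function with the self-improvement property vanishes for `ν < 9 / 8`. By induction `g ≤ ε_k` for
`ν < 9/8 + 2^(-k)/8`, where `n_k = n₀ 4 ^ k` and `ε_k = (2 B n_k ^ K)^(-1/δ)` is the largest value for which
`ucp_absorb` applies with exponent `n_k`. Passing from `r_k` to `r_{k+1}` gains a factor exponentially small in
`n₀ 2 ^ k`, which dominates all polynomial factors in `n_k`. -/
theorem ucp_iteration {B : ℝ} (hB : 1 ≤ B) {K : ℕ} (hK : 1 ≤ K) {δ : ℝ} (hδ : 0 < δ) :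
    ∃ ε₀ : ℝ, 0 < ε₀ ∧ ∀ {α : Type} {ν g : α → ℝ}, (∀ x, 0 ≤ g x) → (∀ x, 0 ≤ ν x) →
      (∀ x, g x = 0 ∨ 1 ≤ ν x) → UcpStep B K δ ν g → (∀ x, ν x < 5 / 4 → g x ≤ ε₀) →
      ∀ x, ν x < 9 / 8 → g x = 0 := by
  -- the scale `n₀` beyond which the exponential beats the polynomial
  have hasym : ∀ᶠ X : ℝ in atTop, (B * (2 * B * 4 ^ K) ^ (1 / δ)) * (X ^ (2 * (K : ℝ) + 2 * K / δ) *
      Real.exp (-(1 / 20) * X)) < 1 := by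
    have h1 := tendsto_rpow_mul_exp_neg_mul_atTop_nhds_zero (2 * (K : ℝ) + 2 * K / δ) (1 / 20) (by norm_num)
    have h2 := h1.const_mul (B * (2 * B * 4 ^ K) ^ (1 / δ))
    rw [mul_zero] at h2
    exact h2.eventually (gt_mem_nhds one_pos)
  obtain ⟨X₀, hX₀⟩ := eventually_atTop.1 hasym
  obtain ⟨n₀, hn₀⟩ := exists_nat_ge (max X₀ 1)
  have hn₀1 : (1 : ℝ) ≤ n₀ := (le_max_right _ _).trans hn₀
  have hn₀X : X₀ ≤ n₀ := (le_max_left _ _).trans hn₀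
  set n : ℕ → ℕ := fun k => n₀ * 4 ^ k with hn
  have hn1 : ∀ k, (1 : ℝ) ≤ n k := fun k => by
    simp only [hn]; push_cast
    exact one_le_mul_of_one_le_of_one_le hn₀1 (one_le_pow₀ (by norm_num))
  set P : ℕ → ℝ := fun k => 2 * B * (n k : ℝ) ^ K with hP
  have hP1 : ∀ k, 1 ≤ P k := fun k => by
    have := one_le_pow₀ (hn1 k) (n := K)
    simp only [hP]; nlinarith
  set ε : ℕ → ℝ := fun k => P k ^ (-(1 / δ)) with hε
  have hε0 : ∀ k, 0 < ε k := fun k => Real.rpow_pos_of_pos (by linarith [hP1 k]) _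
  have hε1 : ∀ k, ε k ≤ 1 := fun k => Real.rpow_le_one_of_one_le_of_nonpos (hP1 k) (by
    have : 0 < 1 / δ := by positivity
    linarith)
  have hεδ : ∀ k, B * (n k : ℝ) ^ K * ε k ^ δ ≤ 1 / 2 := fun k => by
    have hPk : 0 < P k := by linarith [hP1 k]
    have : ε k ^ δ = (P k)⁻¹ := by
      simp only [hε]
      rw [← Real.rpow_mul hPk.le, ← Real.rpow_neg_one]
      congr 1; field_simp
    rw [this]
    have e : B * (n k : ℝ) ^ K = P k / 2 := by simp only [hP]; ring
    rw [e]; apply le_of_eq; field_simp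
  have hεlim : Tendsto ε atTop (𝓝 0) := by
    refine (tendsto_rpow_neg_atTop (show 0 < 1 / δ by positivity)).comp ?_
    refine tendsto_atTop_mono (f := fun k : ℕ => (4 : ℝ) ^ k) (fun k => ?_) (tendsto_pow_atTop_atTop_of_one_lt (by norm_num))
    have h1 : (4 : ℝ) ^ k ≤ n k := by
      simp only [hn]; push_cast
      have : (0 : ℝ) ≤ 4 ^ k := by positivity
      nlinarith
    have h2 : (n k : ℝ) ≤ (n k : ℝ) ^ K := le_self_pow₀ (hn1 k) (by omega)
    have h3 : (0 : ℝ) ≤ (n k : ℝ) ^ K := by positivity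
    simp only [hP]; nlinarith
  refine ⟨ε 0, hε0 0, ?_⟩
  intro α ν g hg0 hν hgν hstep hsm
  have main : ∀ k : ℕ, ∀ x, ν x < 9 / 8 + (1 / 2) ^ k / 8 → g x ≤ ε k := by
    intro k
    induction k with
    | zero =>
      intro x hx
      exact hsm x (by norm_num at hx ⊢; linarith)
    | succ k ih =>
      intro x hx
      set t : ℝ := (1 / 2) ^ k with ht
      have ht0 : 0 < t := by positivity
      have ht1 : t ≤ 1 := pow_le_one₀ (by norm_num) (by norm_num)
      rw [pow_succ, ← ht] at hx
      have hx' : ν x < 9 / 8 + t / 8 := by linarith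
      have h := ucp_absorb hB hν hgν hstep (r := 9 / 8 + t / 8) (by linarith) (by linarith)
        (n := n k) (by exact_mod_cast hn1 k) (hε0 k) (hε1 k) (hεδ k) ih x hx'
      set X : ℝ := n₀ * 2 ^ k with hX
      have h2k : (1 : ℝ) ≤ 2 ^ k := one_le_pow₀ (by norm_num)
      have hXn : (n₀ : ℝ) ≤ X := by rw [hX]; nlinarith
      have hX1 : 1 ≤ X := hn₀1.trans hXn
      have hXpos : 0 < X := by linarith
      have hnX : (n k : ℝ) ≤ X ^ 2 := by
        have : (4 : ℝ) ^ k = 2 ^ k * 2 ^ k := by rw [← mul_pow]; norm_num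
        simp only [hn, hX]; push_cast
        rw [this]
        have : (0 : ℝ) ≤ 2 ^ k * 2 ^ k := by positivity
        nlinarith
      have hratio : ν x / (9 / 8 + t / 8) ≤ 1 - t / 20 := by
        rw [div_le_iff₀ (by linarith)]
        nlinarith
      have hpow : (ν x / (9 / 8 + t / 8)) ^ n k ≤ Real.exp (-(1 / 20) * X) := by
        have e1 : 1 - t / 20 ≤ Real.exp (-(t / 20)) := by
          have := Real.add_one_le_exp (-(t / 20)); linarith
        have e2 : (ν x / (9 / 8 + t / 8)) ^ n k ≤ Real.exp (-(t / 20)) ^ n k :=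
          pow_le_pow_left₀ (div_nonneg (hν x) (by linarith)) (hratio.trans e1) _
        refine e2.trans (le_of_eq ?_)
        rw [← Real.exp_nat_mul]
        congr 1
        have : t * 4 ^ k = 2 ^ k := by
          rw [ht, ← mul_pow]; norm_num
        simp only [hn, hX]; push_cast
        linear_combination -(n₀ : ℝ) / 20 * this
      have hA := (hX₀ X (hn₀X.trans hXn)).le
      have hPk : 0 < P (k + 1) := by linarith [hP1 (k + 1)]
      have hPle : P (k + 1) ≤ (2 * B * 4 ^ K) * X ^ (2 * (K : ℝ)) := by
        have e1 : (n (k + 1) : ℝ) = 4 * n k := by simp only [hn]; push_cast; ring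
        have e2 : X ^ (2 * (K : ℝ)) = (X ^ 2) ^ K := by
          rw [← pow_mul, ← Real.rpow_natCast]; push_cast; rfl
        have e3 : (n k : ℝ) ^ K ≤ (X ^ 2) ^ K := pow_le_pow_left₀ (by linarith [hn1 k]) hnX _
        simp only [hP]
        rw [e1, e2, mul_pow, ← mul_assoc]
        exact mul_le_mul_of_nonneg_left e3 (by positivity)
      have hPpow : P (k + 1) ^ (1 / δ) ≤ (2 * B * 4 ^ K) ^ (1 / δ) * X ^ (2 * K / δ) := by
        refine (Real.rpow_le_rpow hPk.le hPle (by positivity)).trans (le_of_eq ?_)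
        rw [Real.mul_rpow (by positivity) (by positivity), ← Real.rpow_mul hXpos.le]
        congr 2; ring
      have hnK : (n k : ℝ) ^ K ≤ X ^ (2 * (K : ℝ)) := by
        have e2 : X ^ (2 * (K : ℝ)) = (X ^ 2) ^ K := by
          rw [← pow_mul, ← Real.rpow_natCast]; push_cast; rfl
        rw [e2]
        exact pow_le_pow_left₀ (by linarith [hn1 k]) hnX _
      have hε' : ε (k + 1) = (P (k + 1) ^ (1 / δ))⁻¹ := by
        simp only [hε]; rw [Real.rpow_neg hPk.le]
      have hfin : B * (n k : ℝ) ^ K * Real.exp (-(1 / 20) * X) * P (k + 1) ^ (1 / δ) ≤ 1 := by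
        calc B * (n k : ℝ) ^ K * Real.exp (-(1 / 20) * X) * P (k + 1) ^ (1 / δ)
            ≤ B * X ^ (2 * (K : ℝ)) * Real.exp (-(1 / 20) * X) * ((2 * B * 4 ^ K) ^ (1 / δ) * X ^ (2 * K / δ)) := by
              gcongr
          _ = (B * (2 * B * 4 ^ K) ^ (1 / δ)) * (X ^ (2 * (K : ℝ) + 2 * K / δ) * Real.exp (-(1 / 20) * X)) := by
              rw [Real.rpow_add hXpos]; ring
          _ ≤ 1 := hA
      rw [hε', ← one_div, le_div_iff₀ (by positivity)]
      refine le_trans ?_ hfin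
      refine mul_le_mul_of_nonneg_right (h.trans ?_) (by positivity)
      exact mul_le_mul_of_nonneg_left hpow (by positivity)
  intro x hx
  refine le_antisymm (ge_of_tendsto' hεlim fun k => main k x ?_) (hg0 x)
  have : (0 : ℝ) < (1 / 2) ^ k / 8 := by positivity
  linarith

end iteration

/-! ### Cutting off -/

section cutoff
variable {N : ℕ}

theorem ucpLap_zero_of_eventually {ψ : EuclideanSpace ℝ (Fin N) → ℝ} {y : EuclideanSpace ℝ (Fin N)}
    (h : ∀ᶠ z in 𝓝 y, ψ z = 0) : ucpLap ψ y = 0 := by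
  have h' : ψ =ᶠ[𝓝 y] fun _ => 0 := h
  rw [(ucpLap_congr h').eq_of_nhds]
  have : ∀ e : EuclideanSpace ℝ (Fin N), ucpD e (fun _ => (0 : ℝ)) = fun _ => 0 := fun e => by
    funext z; simp [ucpD]
  simp [ucpLap, this]

/-- A smooth cutoff, equal to one on `ball 0 (5/4)`, vanishing off `ball 0 (3/2)`, together with a bound for
the commutator of its multiplication with the Laplacian. -/
theorem ucp_bump (N : ℕ) : ∃ η : EuclideanSpace ℝ (Fin N) → ℝ, ∃ H : ℝ, 0 < H ∧ ContDiff ℝ ∞ η ∧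
    (∀ y, ‖y‖ < 5 / 4 → η y = 1) ∧ (∀ y, 3 / 2 ≤ ‖y‖ → η y = 0) ∧
    ∀ (w : EuclideanSpace ℝ (Fin N) → ℝ) (y : EuclideanSpace ℝ (Fin N)) (M : ℝ), 0 ≤ M →
      ContDiffAt ℝ 2 w y → |w y| ≤ M → (∀ i, |ucpD (EuclideanSpace.single i 1) w y| ≤ M) → |ucpLap w y| ≤ M →
      |ucpLap (fun z => η z * w z) y| ≤ H * M := by
  let b : ContDiffBump (0 : EuclideanSpace ℝ (Fin N)) := ⟨5 / 4, 3 / 2, by norm_num, by norm_num⟩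
  have hb : ContDiff ℝ ∞ b := b.contDiff
  have hbc : HasCompactSupport b := b.hasCompactSupport
  have hDD : ∀ i : Fin N, ContDiff ℝ ∞ (ucpD (EuclideanSpace.single i 1) b) := fun i => ucpD_contDiff hb _
  obtain ⟨H0, hH0⟩ := hb.continuous.bounded_above_of_compact_support hbc
  have h1 : ∀ i : Fin N, ∃ H1, ∀ y, ‖ucpD (EuclideanSpace.single i 1) b y‖ ≤ H1 := fun i =>
    (hDD i).continuous.bounded_above_of_compact_support (ucpD_hasCompactSupport hbc _)
  have h2 : ∀ i : Fin N, ∃ H2, ∀ y, ‖ucpD (EuclideanSpace.single i 1) (ucpD (EuclideanSpace.single i 1) b) y‖ ≤ H2 :=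
    fun i => (ucpD_contDiff (hDD i) _).continuous.bounded_above_of_compact_support
      (ucpD_hasCompactSupport (ucpD_hasCompactSupport hbc _) _)
  choose H1 hH1 using h1
  choose H2 hH2 using h2
  have p0 : 0 ≤ H0 := (norm_nonneg _).trans (hH0 0)
  have p1 : 0 ≤ ∑ i, H1 i := Finset.sum_nonneg fun i _ => (norm_nonneg _).trans (hH1 i 0)
  have p2 : 0 ≤ ∑ i, H2 i := Finset.sum_nonneg fun i _ => (norm_nonneg _).trans (hH2 i 0)
  refine ⟨b, H0 + ∑ i, H2 i + 2 * ∑ i, H1 i + 1, by positivity, hb, ?_, ?_, ?_⟩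
  · intro y hy
    exact b.one_of_mem_closedBall (by rw [mem_closedBall_zero_iff]; exact hy.le)
  · intro y hy
    exact b.zero_of_le_dist (by rw [dist_zero_right]; exact hy)
  · intro w y M hM hw hwM hDM hLM
    rw [ucpLap_mul (hb.contDiffAt.of_le ENat.LEInfty.out) hw]
    have a1 : |b y * ucpLap w y| ≤ H0 * M := by
      rw [abs_mul]; exact mul_le_mul (hH0 y) hLM (abs_nonneg _) p0
    have a2 : |w y * ucpLap b y| ≤ (∑ i, H2 i) * M := by
      rw [abs_mul, mul_comm]
      refine mul_le_mul ?_ hwM (abs_nonneg _) p2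
      exact (Finset.abs_sum_le_sum_abs _ _).trans (Finset.sum_le_sum fun i _ => hH2 i y)
    have a3 : |∑ i : Fin N, ucpD (EuclideanSpace.single i 1) b y * ucpD (EuclideanSpace.single i 1) w y| ≤
        (∑ i, H1 i) * M := by
      rw [Finset.sum_mul]
      refine (Finset.abs_sum_le_sum_abs _ _).trans (Finset.sum_le_sum fun i _ => ?_)
      rw [abs_mul]
      exact mul_le_mul (hH1 i y) (hDM i) (abs_nonneg _) ((norm_nonneg _).trans (hH1 i 0))
    rw [abs_le] at a1 a2 a3 ⊢
    constructor <;> nlinarith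

/-- The standing assumptions, at unit scale, on a function `w` on the closed ball of centre `c` and radius `R`:
it is `C²` there, is bounded by `M` together with its first derivatives and Laplacian inside the ball
`‖y‖ < 2`, has zero Cauchy data on the part of the sphere inside `‖y‖ < 2`, and vanishes for `‖y‖ < 1`. -/
def UcpAdm (c : EuclideanSpace ℝ (Fin N)) (R M : ℝ) (w : EuclideanSpace ℝ (Fin N) → ℝ) : Prop :=
  ContDiffOn ℝ 2 w (closedBall c R) ∧
  (∀ y ∈ ball c R, ‖y‖ < 2 →
    |w y| ≤ M ∧ (∀ i, |ucpD (EuclideanSpace.single i 1) w y| ≤ M) ∧ |ucpLap w y| ≤ M) ∧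
  (∀ y ∈ sphere c R, ‖y‖ < 2 → w y = 0 ∧ fderivWithin ℝ w (closedBall c R) y = 0) ∧
  (∀ y ∈ closedBall c R, ‖y‖ < 1 → w y = 0)

/-- The weighted estimate for functions known on `‖y‖ < 2` only: it is applied to the cut-off function extended
by zero. The region `r ≤ ‖y‖`, where `Δ(η w)` is merely bounded by `H M`, contributes the term with `r⁻¹ ^ m`. -/
theorem ucp_cutoff (hN : 1 ≤ N) : ∃ A H : ℝ, 0 < A ∧ 0 < H ∧
    ∀ (c : EuclideanSpace ℝ (Fin N)) (R : ℝ), 0 < R → ∀ (w : EuclideanSpace ℝ (Fin N) → ℝ) (M : ℝ), 0 ≤ M →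
      UcpAdm c R M w →
      ∀ m : ℕ, 1 ≤ m → ∀ T : ℝ, 0 ≤ T → ∀ r : ℝ, 1 ≤ r → r ≤ 5 / 4 →
      (∀ y ∈ ball c R, ‖y‖ < r → |ucpLap w y| ≤ T * ‖y‖ ^ m) →
      ∀ x ∈ closedBall c R, ‖x‖ < 5 / 4 → |w x| ≤ A * (m : ℝ) ^ (N + 1) * (T + H * M * r⁻¹ ^ m) * ‖x‖ ^ m := by
  obtain ⟨A, hA, hcar⟩ := ucp_carleman (N := N) hN
  obtain ⟨η, H, hH, hη, hη1, hη0, hηM⟩ := ucp_bump N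
  refine ⟨A, H, hA, hH, ?_⟩
  intro c R hR w M hM ⟨hw, hbd, hsph, hvan⟩ m hm T hT r hr1 hr2 hlap x hx hx2
  set w0 : EuclideanSpace ℝ (Fin N) → ℝ := fun z => η z * w z with hw0
  have hηO : ContDiffOn ℝ 2 η (closedBall c R) := (hη.of_le ENat.LEInfty.out).contDiffOn
  have hw0C : ContDiffOn ℝ 2 w0 (closedBall c R) := hηO.mul hw
  have hfar : ∀ y : EuclideanSpace ℝ (Fin N), 2 ≤ ‖y‖ → ∀ᶠ z in 𝓝 y, η z = 0 := by
    intro y hy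
    filter_upwards [(isOpen_lt continuous_const continuous_norm).mem_nhds
      (show y ∈ {z : EuclideanSpace ℝ (Fin N) | 3 / 2 < ‖z‖} by rw [mem_ofPred_eq]; linarith)] with z hz
    exact hη0 z (le_of_lt hz)
  have hs0 : ∀ y ∈ sphere c R, w0 y = 0 := by
    intro y hy
    simp only [hw0]
    rcases lt_or_ge ‖y‖ 2 with h | h
    · rw [(hsph y hy h).1, mul_zero]
    · rw [(hfar y h).self_of_nhds, zero_mul]
  have hs1 : ∀ y ∈ sphere c R, fderivWithin ℝ w0 (closedBall c R) y = 0 := by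
    intro y hy
    have hyc := sphere_subset_closedBall hy
    rcases lt_or_ge ‖y‖ 2 with h | h
    · have hud := ucp_uniqueDiffOn c hR y hyc
      rw [hw0, fderivWithin_fun_mul hud (hηO.differentiableOn (by norm_num) y hyc)
        (hw.differentiableOn (by norm_num) y hyc), (hsph y hy h).1, (hsph y hy h).2]
      simp
    · have : w0 =ᶠ[𝓝[closedBall c R] y] fun _ => 0 := by
        filter_upwards [mem_nhdsWithin_of_mem_nhds (hfar y h)] with z hz
        simp only [hw0]; rw [show η z = 0 from hz, zero_mul]
      rw [this.fderivWithin_eq_of_mem hyc]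
      simp
  have hWc : Continuous ((closedBall c R).indicator w0) := by
    obtain ⟨K, hK⟩ := ucp_ext_lipschitz hR (hw0C.of_le (by norm_num)) hs0
    exact hK.continuous
  have key := hcar ((closedBall c R).indicator w0) ((ball c R).indicator (ucpLap w0)) hWc ?_ ?_ m hm
    (T + H * M * r⁻¹ ^ m) (by positivity) ?_ x
  · rw [indicator_of_mem hx] at key
    simp only [hw0] at key
    rwa [hη1 x hx2, one_mul] at key
  · intro y hy
    rcases lt_or_ge ‖y‖ 1 with h | h
    · constructor
      · by_cases hyc : y ∈ closedBall c R
        · rw [indicator_of_mem hyc, hw0]; simp [hvan y hyc h]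
        · rw [indicator_of_notMem hyc]
      · by_cases hyc : y ∈ ball c R
        · rw [indicator_of_mem hyc]
          apply ucpLap_zero_of_eventually
          filter_upwards [ucp_closedBall_mem_nhds hyc, (isOpen_lt continuous_norm continuous_const).mem_nhds
            (show y ∈ {z : EuclideanSpace ℝ (Fin N) | ‖z‖ < 1} from h)] with z hz hz1
          simp only [hw0]; rw [hvan z hz hz1, mul_zero]
        · rw [indicator_of_notMem hyc]
    · have h2 : 2 ≤ ‖y‖ := by
        by_contra h'
        exact hy ⟨h, (not_le.1 h').le⟩
      constructor
      · apply indicator_apply_eq_zero.2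
        intro _
        simp only [hw0]; rw [(hfar y h2).self_of_nhds, zero_mul]
      · apply indicator_apply_eq_zero.2
        intro _
        apply ucpLap_zero_of_eventually
        filter_upwards [hfar y h2] with z hz
        simp only [hw0]; rw [hz, zero_mul]
  · intro ψ hψ hψc
    exact ucp_green hR hw0C hs0 hs1 hψ hψc
  · intro y
    have hr0 : 0 < r := by linarith
    by_cases hyc : y ∈ ball c R
    swap
    · rw [indicator_of_notMem hyc, abs_zero]; positivity
    rw [indicator_of_mem hyc]
    rcases lt_or_ge ‖y‖ r with h | h
    · have hev : w0 =ᶠ[𝓝 y] w := by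
        filter_upwards [(isOpen_lt continuous_norm continuous_const).mem_nhds
            (show y ∈ {z : EuclideanSpace ℝ (Fin N) | ‖z‖ < 5 / 4} from h.trans_le hr2)] with z hz
        simp only [hw0]; rw [hη1 z hz, one_mul]
      rw [(ucpLap_congr hev).eq_of_nhds]
      refine (hlap y hyc h).trans (mul_le_mul_of_nonneg_right ?_ (by positivity))
      have : 0 ≤ H * M * r⁻¹ ^ m := by positivity
      linarith
    · have hle : |ucpLap w0 y| ≤ H * M := by
        rcases lt_or_ge ‖y‖ 2 with h2 | h2
        · obtain ⟨b1, b2, b3⟩ := hbd y hyc h2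
          exact hηM w y M hM (hw.contDiffAt (ucp_closedBall_mem_nhds hyc)) b1 b2 b3
        · rw [ucpLap_zero_of_eventually, abs_zero]
          · positivity
          · filter_upwards [hfar y h2] with z hz
            simp only [hw0]; rw [hz, zero_mul]
      have h1 : 1 ≤ r⁻¹ ^ m * ‖y‖ ^ m := by
        rw [← mul_pow]
        apply one_le_pow₀
        rw [inv_mul_eq_div, one_le_div hr0]; exact h
      have h2 : H * M * 1 ≤ H * M * (r⁻¹ ^ m * ‖y‖ ^ m) := mul_le_mul_of_nonneg_left h1 (by positivity)
      have h3 : 0 ≤ T * ‖y‖ ^ m := by positivity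
      calc |ucpLap w0 y| ≤ H * M := hle
        _ ≤ (T + H * M * r⁻¹ ^ m) * ‖y‖ ^ m := by linarith

end cutoff

/-! ### Local uniqueness at unit scale -/

section local_ucp
variable {N : ℕ}

/-- Superlinearity gives a rational number `i / j` strictly between `1 / p` and `q`. -/
theorem ucp_exponents {p q : ℝ} (hp : 0 < p) (hpq : 1 < p * q) :
    ∃ i j : ℕ, 1 ≤ i ∧ 1 ≤ j ∧ (j : ℝ) < i * p ∧ (i : ℝ) < j * q := by
  have h : p⁻¹ < q := by
    rw [inv_lt_iff_one_lt_mul₀ hp]; linarith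
  obtain ⟨t, ht1, ht2⟩ := exists_rat_btwn h
  have ht0 : (0 : ℝ) < t := (inv_pos.2 hp).trans ht1
  have htq : 0 < t := by exact_mod_cast ht0
  have hnum : 0 < t.num := Rat.num_pos.2 htq
  have hden : (0 : ℝ) < t.den := by exact_mod_cast t.den_pos
  have hcast : (t : ℝ) = (t.num.toNat : ℝ) / t.den := by
    have h1 : ((t.num.toNat : ℕ) : ℤ) = t.num := Int.toNat_of_nonneg hnum.le
    have h2 : ((t.num.toNat : ℕ) : ℝ) = (t.num : ℝ) := by exact_mod_cast congrArg (Int.cast (R := ℝ)) h1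
    rw [h2]; exact Rat.cast_def t
  refine ⟨t.num.toNat, t.den, by omega, t.den_pos, ?_, ?_⟩
  · rw [hcast, inv_lt_iff_one_lt_mul₀ hp, div_mul_eq_mul_div, one_lt_div hden] at ht1
    exact ht1
  · rw [hcast, div_lt_iff₀ hden] at ht2
    linarith

/-- The `i`-th root of the cutoff estimate with exponent `n * i` is a step bound with exponent `n`. -/
theorem ucp_root_bound {i : ℕ} (hi : 1 ≤ i) {n K : ℕ} (hn : 1 ≤ n) {B A C H M ε δ s Z r a x : ℝ} (hB : 1 ≤ B)
    (hA : 0 ≤ A) (hC : 0 ≤ C) (hHM : 0 ≤ H * M)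
    (hAB : A * (i : ℝ) ^ K * (C + H * M) ≤ B) (hε : 0 < ε) (hε1 : ε ≤ 1) (hs : i * δ ≤ s) (hZ : 0 ≤ Z)
    (hr : 1 ≤ r) (hx : 0 ≤ x) (ha : 0 ≤ a)
    (h : a ≤ A * ((n * i : ℕ) : ℝ) ^ K * (C * ε ^ s * Z ^ i + H * M * r⁻¹ ^ (n * i)) * x ^ (n * i)) :
    a ^ (i : ℝ)⁻¹ ≤ B * (n : ℝ) ^ K * max (ε ^ δ * Z) (r⁻¹ ^ n) * x ^ n := by
  set X := max (ε ^ δ * Z) (r⁻¹ ^ n) with hX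
  have hX0 : 0 ≤ X := le_max_of_le_left (by positivity)
  have hr0 : 0 < r := by linarith
  have hn1 : (1 : ℝ) ≤ (n : ℝ) ^ K := one_le_pow₀ (by exact_mod_cast hn)
  have hi0 : (i : ℝ) ≠ 0 := by positivity
  have h1 : ε ^ s * Z ^ i ≤ X ^ i := by
    calc ε ^ s * Z ^ i ≤ ε ^ (δ * i) * Z ^ i :=
          mul_le_mul_of_nonneg_right (Real.rpow_le_rpow_of_exponent_ge hε hε1 (by linarith)) (by positivity)
      _ = (ε ^ δ * Z) ^ i := by rw [mul_pow, Real.rpow_mul hε.le, Real.rpow_natCast]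
      _ ≤ X ^ i := pow_le_pow_left₀ (by positivity) (le_max_left _ _) i
  have h2 : r⁻¹ ^ (n * i) ≤ X ^ i := by
    rw [pow_mul]
    exact pow_le_pow_left₀ (by positivity) (le_max_right _ _) i
  have h3 : C * ε ^ s * Z ^ i + H * M * r⁻¹ ^ (n * i) ≤ (C + H * M) * X ^ i := by
    rw [mul_assoc, add_mul]
    exact add_le_add (mul_le_mul_of_nonneg_left h1 hC) (mul_le_mul_of_nonneg_left h2 hHM)
  have h4 : a ≤ (B * (n : ℝ) ^ K * X * x ^ n) ^ i := by
    calc a ≤ A * ((n * i : ℕ) : ℝ) ^ K * ((C + H * M) * X ^ i) * x ^ (n * i) :=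
          h.trans (mul_le_mul_of_nonneg_right (mul_le_mul_of_nonneg_left h3 (by positivity)) (by positivity))
      _ = (A * (i : ℝ) ^ K * (C + H * M)) * (n : ℝ) ^ K * X ^ i * x ^ (n * i) := by
          push_cast; rw [mul_pow]; ring
      _ ≤ B ^ i * ((n : ℝ) ^ K) ^ i * X ^ i * x ^ (n * i) := by
          have e1 : A * (i : ℝ) ^ K * (C + H * M) ≤ B ^ i := hAB.trans (le_self_pow₀ hB (by omega))
          have e2 : (n : ℝ) ^ K ≤ ((n : ℝ) ^ K) ^ i := le_self_pow₀ hn1 (by omega)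
          have e3 : 0 ≤ A * (i : ℝ) ^ K * (C + H * M) := by positivity
          gcongr
      _ = _ := by rw [pow_mul]; ring
  calc a ^ (i : ℝ)⁻¹ ≤ ((B * (n : ℝ) ^ K * X * x ^ n) ^ i) ^ (i : ℝ)⁻¹ :=
        Real.rpow_le_rpow ha h4 (by positivity)
    _ = _ := Real.pow_rpow_inv_natCast (by positivity) (by omega)

/-- Bound for the right-hand side of one equation of the system: `b ^ q ≤ g ^ (j q) = g ^ (j q - i) * g ^ i`, and
the surplus power `j q - i > 0` yields the small factor `ε ^ (j q - i)`. -/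
theorem ucp_source_bound {i j n : ℕ} (hj : 1 ≤ j) {q C ε Z b g x l : ℝ} (hC : 0 ≤ C) (hq : 0 < q)
    (hij : (i : ℝ) < j * q) (hb : 0 ≤ b) (hbg : b ^ (j : ℝ)⁻¹ ≤ g) (hgε : g ≤ ε) (hgZ : g ≤ Z * x ^ n)
    (hl : l ≤ C * b ^ q) : l ≤ C * ε ^ (j * q - i) * Z ^ i * x ^ (n * i) := by
  have hg : 0 ≤ g := (Real.rpow_nonneg hb _).trans hbg
  have h1 : b ≤ g ^ j := by
    rw [← Real.rpow_inv_natCast_pow hb (show j ≠ 0 by omega)]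
    exact pow_le_pow_left₀ (Real.rpow_nonneg hb _) hbg j
  have h2 : b ^ q ≤ ε ^ (j * q - i) * (Z * x ^ n) ^ i := by
    calc b ^ q ≤ (g ^ j) ^ q := Real.rpow_le_rpow hb h1 hq.le
      _ = g ^ ((j * q - i) + i) := by rw [← Real.rpow_natCast, ← Real.rpow_mul hg]; congr 1; ring
      _ = g ^ (j * q - i) * g ^ i := by
          rw [Real.rpow_add_of_nonneg hg (by linarith) (by positivity), Real.rpow_natCast]
      _ ≤ _ := mul_le_mul (Real.rpow_le_rpow hg hgε (by linarith)) (pow_le_pow_left₀ hg hgZ i)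
          (by positivity) (Real.rpow_nonneg (hg.trans hgε) _)
  calc l ≤ C * b ^ q := hl
    _ ≤ C * (ε ^ (j * q - i) * (Z * x ^ n) ^ i) := mul_le_mul_of_nonneg_left h2 hC
    _ = _ := by rw [mul_pow, pow_mul]; ring

/-- Local uniqueness at unit scale: small solutions vanishing for `‖y‖ < 1` vanish for `‖y‖ < 9 / 8`. The
smallness threshold depends only on the exponents, the constants `C` and `M`, and the dimension. The iteration
is applied to `g = max (|u| ^ (1/i)) (|v| ^ (1/j))`, a choice for which both equations improve by the same
type of factor. -/
theorem ucp_local (hN : 1 ≤ N) {p q C M : ℝ} (hp : 0 < p) (hq : 0 < q) (hpq : 1 < p * q) (hC : 0 < C)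
    (hM : 0 ≤ M) : ∃ ε₁ : ℝ, 0 < ε₁ ∧ ∀ (c : EuclideanSpace ℝ (Fin N)) (R : ℝ), 0 < R →
      ∀ u v : EuclideanSpace ℝ (Fin N) → ℝ, UcpAdm c R M u → UcpAdm c R M v →
      (∀ y ∈ ball c R, ‖y‖ < 2 → |ucpLap u y| ≤ C * |v y| ^ q ∧ |ucpLap v y| ≤ C * |u y| ^ p) →
      (∀ y ∈ closedBall c R, ‖y‖ < 5 / 4 → |u y| ≤ ε₁ ∧ |v y| ≤ ε₁) →
      ∀ y ∈ closedBall c R, ‖y‖ < 9 / 8 → u y = 0 ∧ v y = 0 := by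
  obtain ⟨A, H, hA, hH, hcut⟩ := ucp_cutoff (N := N) hN
  obtain ⟨i, j, hi, hj, hij1, hij2⟩ := ucp_exponents hp hpq
  have hi0 : (0 : ℝ) < i := by exact_mod_cast hi
  have hj0 : (0 : ℝ) < j := by exact_mod_cast hj
  set δ := min ((j * q - i) / i) ((i * p - j) / j) with hδ
  have hδ0 : 0 < δ := lt_min (div_pos (by linarith) hi0) (div_pos (by linarith) hj0)
  have hδi : i * δ ≤ j * q - i := by
    have := min_le_left ((j * q - i) / i) ((i * p - j) / j)
    rwa [← hδ, le_div_iff₀ hi0, mul_comm] at this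
  have hδj : j * δ ≤ i * p - j := by
    have := min_le_right ((j * q - i) / i) ((i * p - j) / j)
    rwa [← hδ, le_div_iff₀ hj0, mul_comm] at this
  set B := max 1 (max (A * (i : ℝ) ^ (N + 1) * (C + H * M)) (A * (j : ℝ) ^ (N + 1) * (C + H * M))) with hBdef
  have hB : 1 ≤ B := le_max_left _ _
  have hBi : A * (i : ℝ) ^ (N + 1) * (C + H * M) ≤ B := (le_max_left _ _).trans (le_max_right _ _)
  have hBj : A * (j : ℝ) ^ (N + 1) * (C + H * M) ≤ B := (le_max_right _ _).trans (le_max_right _ _)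
  obtain ⟨ε₀, hε₀, hiter⟩ := ucp_iteration hB (K := N + 1) (by omega) hδ0
  have hHM : 0 ≤ H * M := by positivity
  refine ⟨min (ε₀ ^ i) (ε₀ ^ j), lt_min (by positivity) (by positivity), ?_⟩
  intro c R hR u v hu hv hlap hsmall
  have hroot : ∀ {k : ℕ}, 1 ≤ k → ∀ {a e : ℝ}, 0 ≤ a → 0 ≤ e → a ≤ e ^ k → a ^ (k : ℝ)⁻¹ ≤ e := by
    intro k hk a e ha he h
    calc a ^ (k : ℝ)⁻¹ ≤ (e ^ k) ^ (k : ℝ)⁻¹ := Real.rpow_le_rpow ha h (by positivity)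
      _ = e := Real.pow_rpow_inv_natCast he (by omega)
  set g : closedBall c R → ℝ := fun x => max (|u x| ^ (i : ℝ)⁻¹) (|v x| ^ (j : ℝ)⁻¹) with hg
  have key : ∀ x : closedBall c R, ‖(x : EuclideanSpace ℝ (Fin N))‖ < 9 / 8 → g x = 0 := by
    refine hiter (ν := fun x : closedBall c R => ‖(x : EuclideanSpace ℝ (Fin N))‖) ?_ ?_ ?_ ?_ ?_
    · intro x
      exact le_max_of_le_left (by positivity)
    · intro x
      positivity
    · intro x
      rcases lt_or_ge ‖(x : EuclideanSpace ℝ (Fin N))‖ 1 with h | h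
      · left
        simp only [hg]
        rw [hu.2.2.2 x x.2 h, hv.2.2.2 x x.2 h, abs_zero, Real.zero_rpow (by positivity),
          Real.zero_rpow (by positivity), max_self]
      · right; exact h
    · intro r hr1 hr2 n hn ε hε hε1 Z hZ hgε hgZ x hx
      have hni : 1 ≤ n * i := Nat.mul_pos hn hi
      have hnj : 1 ≤ n * j := Nat.mul_pos hn hj
      apply max_le
      · apply ucp_root_bound hi hn hB hA.le hC.le hHM hBi hε hε1 hδi hZ hr1 (norm_nonneg _) (abs_nonneg _)
        apply hcut c R hR u M hM hu (n * i) hni _ (by positivity) r hr1 hr2 _ x x.2 (hx.trans_le hr2)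
        intro y hy hyr
        have hyc := ball_subset_closedBall hy
        exact ucp_source_bound hj hC.le hq hij2 (abs_nonneg _) (le_max_right _ _) (hgε ⟨y, hyc⟩ hyr)
          (hgZ ⟨y, hyc⟩ hyr) (hlap y hy (by linarith)).1
      · apply ucp_root_bound hj hn hB hA.le hC.le hHM hBj hε hε1 hδj hZ hr1 (norm_nonneg _) (abs_nonneg _)
        apply hcut c R hR v M hM hv (n * j) hnj _ (by positivity) r hr1 hr2 _ x x.2 (hx.trans_le hr2)
        intro y hy hyr
        have hyc := ball_subset_closedBall hy
        exact ucp_source_bound hi hC.le hp hij1 (abs_nonneg _) (le_max_left _ _) (hgε ⟨y, hyc⟩ hyr)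
          (hgZ ⟨y, hyc⟩ hyr) (hlap y hy (by linarith)).2
    · intro x hx
      obtain ⟨h1, h2⟩ := hsmall x x.2 hx
      exact max_le (hroot hi (abs_nonneg _) hε₀.le (h1.trans (min_le_left _ _)))
        (hroot hj (abs_nonneg _) hε₀.le (h2.trans (min_le_right _ _)))
  intro y hy hy2
  have h := key ⟨y, hy⟩ hy2
  have h1 : |u y| ^ (i : ℝ)⁻¹ ≤ 0 := (le_max_left _ _).trans h.le
  have h2 : |v y| ^ (j : ℝ)⁻¹ ≤ 0 := (le_max_right _ _).trans h.le
  have z : ∀ {a b : ℝ}, 0 < b → |a| ^ b ≤ 0 → a = 0 := by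
    intro a b hb hab
    by_contra hne
    exact absurd hab (not_le.2 (Real.rpow_pos_of_pos (abs_pos.2 hne) b))
  exact ⟨z (by positivity) h1, z (by positivity) h2⟩

end local_ucp

/-! ### Scaling and propagation of zeros -/

section scaling
variable {N : ℕ} {c : EuclideanSpace ℝ (Fin N)} {R : ℝ}

theorem ucp_laplacianWithin_eq {w : EuclideanSpace ℝ (Fin N) → ℝ} (hw : ContDiffOn ℝ 2 w (closedBall c R))
    {y : EuclideanSpace ℝ (Fin N)} (hy : y ∈ ball c R) : laplacianWithin w (closedBall c R) y = ucpLap w y := by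
  have hev : closedBall c R =ᶠ[𝓝 y] univ := eventuallyEq_univ.2 (ucp_closedBall_mem_nhds hy)
  have hc := hw.contDiffAt (ucp_closedBall_mem_nhds hy)
  simp only [laplacianWithin, ucpLap]
  refine Finset.sum_congr rfl fun i _ => ?_
  rw [iteratedFDerivWithin_congr_set hev, iteratedFDerivWithin_univ, iteratedFDeriv_two_apply, ucpD_ucpD hc]
  rfl

theorem ucp_exists_bound (hR : 0 < R) {w : EuclideanSpace ℝ (Fin N) → ℝ}
    (hw : ContDiffOn ℝ 2 w (closedBall c R)) : ∃ M : ℝ, 0 ≤ M ∧ ∀ y ∈ ball c R,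
      |w y| ≤ M ∧ (∀ i, |ucpD (EuclideanSpace.single i 1) w y| ≤ M) ∧ |ucpLap w y| ≤ M := by
  have hud := ucp_uniqueDiffOn c hR
  have hK := isCompact_closedBall c R
  obtain ⟨M0, h0⟩ := hK.exists_bound_of_continuousOn hw.continuousOn
  obtain ⟨M1, h1⟩ := hK.exists_bound_of_continuousOn (hw.continuousOn_fderivWithin hud (by norm_num))
  have hL : ContinuousOn (laplacianWithin w (closedBall c R)) (closedBall c R) := by
    unfold laplacianWithin
    refine continuousOn_finsetSum _ fun i _ => ?_
    have := hw.continuousOn_iteratedFDerivWithin (m := 2) le_rfl hud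
    exact ((ContinuousMultilinearMap.apply ℝ (fun _ : Fin 2 => EuclideanSpace ℝ (Fin N)) ℝ
      ![EuclideanSpace.single i 1, EuclideanSpace.single i 1]).continuous.comp_continuousOn this)
  obtain ⟨M2, h2⟩ := hK.exists_bound_of_continuousOn hL
  refine ⟨max (max M0 M1) (max M2 0), le_max_of_le_right (le_max_right _ _), ?_⟩
  intro y hy
  have hyc := ball_subset_closedBall hy
  refine ⟨(h0 y hyc).trans ((le_max_left _ _).trans (le_max_left _ _)), fun i => ?_, ?_⟩
  · have h3 := h1 y hyc
    rw [fderivWithin_of_mem_nhds (ucp_closedBall_mem_nhds hy)] at h3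
    have h4 := (fderiv ℝ w y).le_opNorm (EuclideanSpace.single i 1)
    rw [PiLp.norm_single, norm_one, mul_one] at h4
    exact (h4.trans h3).trans ((le_max_right _ _).trans (le_max_left _ _))
  · have h3 := h2 y hyc
    rw [ucp_laplacianWithin_eq hw hy] at h3
    exact h3.trans ((le_max_left _ _).trans (le_max_right _ _))

theorem ucpD_scale (w : EuclideanSpace ℝ (Fin N) → ℝ) (a e : EuclideanSpace ℝ (Fin N)) (d : ℝ) :
    ucpD e (fun x => w (a + d • x)) = fun x => d * ucpD e w (a + d • x) := by
  funext x
  have h1 := fderiv_comp_smul (𝕜 := ℝ) (f := fun z => w (a + z)) (x := x) d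
  simp only [ucpD]
  rw [h1, fderiv_comp_add_left]
  simp

theorem ucpLap_scale (w : EuclideanSpace ℝ (Fin N) → ℝ) (a : EuclideanSpace ℝ (Fin N)) (d : ℝ)
    (x : EuclideanSpace ℝ (Fin N)) :
    ucpLap (fun x => w (a + d • x)) x = d ^ 2 * ucpLap w (a + d • x) := by
  simp only [ucpLap, Finset.mul_sum]
  refine Finset.sum_congr rfl fun i _ => ?_
  rw [ucpD_scale, ucpD_const_mul, ucpD_scale]
  ring

theorem ucp_dist_scale (c a x : EuclideanSpace ℝ (Fin N)) {d : ℝ} (hd : 0 < d) :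
    dist (a + d • x) c = d * dist x (d⁻¹ • (c - a)) := by
  rw [dist_eq_norm, dist_eq_norm, ← abs_of_pos hd, ← Real.norm_eq_abs, ← norm_smul, Real.norm_eq_abs,
    abs_of_pos hd, smul_sub, smul_inv_smul₀ hd.ne']
  congr 1; abel

theorem ucp_dist_scale' (a x : EuclideanSpace ℝ (Fin N)) {d : ℝ} (hd : 0 < d) :
    dist (a + d • x) a = d * ‖x‖ := by
  rw [dist_eq_norm, add_sub_cancel_left, norm_smul, Real.norm_eq_abs, abs_of_pos hd]

theorem ucp_adm_scale (hR : 0 < R) {w : EuclideanSpace ℝ (Fin N) → ℝ} {M : ℝ} (hM : 0 ≤ M)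
    (hw : ContDiffOn ℝ 2 w (closedBall c R))
    (hbd : ∀ y ∈ ball c R, |w y| ≤ M ∧ (∀ i, |ucpD (EuclideanSpace.single i 1) w y| ≤ M) ∧ |ucpLap w y| ≤ M)
    {a : EuclideanSpace ℝ (Fin N)} {d : ℝ} (hd : 0 < d) (hd1 : d ≤ 1)
    (hs : ∀ y ∈ sphere c R, dist y a < 2 * d → w y = 0 ∧ fderivWithin ℝ w (closedBall c R) y = 0)
    (hvan : ∀ y ∈ closedBall c R, dist y a < d → w y = 0) :
    UcpAdm (d⁻¹ • (c - a)) (R / d) M (fun x => w (a + d • x)) := by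
  have hmapc : ∀ x ∈ closedBall (d⁻¹ • (c - a)) (R / d), a + d • x ∈ closedBall c R := by
    intro x hx
    rw [mem_closedBall, le_div_iff₀' hd] at hx
    rwa [mem_closedBall, ucp_dist_scale _ _ _ hd]
  have hmapb : ∀ x ∈ ball (d⁻¹ • (c - a)) (R / d), a + d • x ∈ ball c R := by
    intro x hx
    rw [mem_ball, lt_div_iff₀' hd] at hx
    rwa [mem_ball, ucp_dist_scale _ _ _ hd]
  have hmaps : ∀ x ∈ sphere (d⁻¹ • (c - a)) (R / d), a + d • x ∈ sphere c R := by
    intro x hx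
    rw [mem_sphere, eq_div_iff hd.ne', mul_comm] at hx
    rwa [mem_sphere, ucp_dist_scale _ _ _ hd]
  have hbound : ∀ {t b : ℝ}, 0 ≤ t → t ≤ 1 → |b| ≤ M → |t * b| ≤ M := by
    intro t b ht ht1 hb
    rw [abs_mul, abs_of_nonneg ht]
    nlinarith [abs_nonneg b]
  refine ⟨?_, ?_, ?_, ?_⟩
  · exact hw.comp (ContDiff.contDiffOn (f := fun x => a + d • x) (by fun_prop)) hmapc
  · intro y hy _
    obtain ⟨b1, b2, b3⟩ := hbd _ (hmapb y hy)
    refine ⟨b1, fun i => ?_, ?_⟩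
    · rw [ucpD_scale]
      exact hbound hd.le hd1 (b2 i)
    · rw [ucpLap_scale]
      exact hbound (by positivity) (pow_le_one₀ hd.le hd1) b3
  · intro y hy hy2
    obtain ⟨b1, b2⟩ := hs _ (hmaps y hy) (by rw [ucp_dist_scale' _ _ hd]; nlinarith)
    refine ⟨b1, ?_⟩
    have hyc := sphere_subset_closedBall hy
    have h1 := (hw.differentiableOn (by norm_num) _ (hmapc y hyc)).hasFDerivWithinAt
    rw [b2] at h1
    have h2 : HasFDerivWithinAt (fun x : EuclideanSpace ℝ (Fin N) => a + d • x)
        (d • ContinuousLinearMap.id ℝ (EuclideanSpace ℝ (Fin N))) (closedBall (d⁻¹ • (c - a)) (R / d)) y :=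
      ((hasFDerivWithinAt_id y _).const_smul d).const_add a
    have h3 := h1.comp y h2 hmapc
    rw [ContinuousLinearMap.zero_comp] at h3
    exact h3.fderivWithin (ucp_uniqueDiffOn _ (by positivity) y hyc)
  · intro y hy hy1
    exact hvan _ (hmapc y hy) (by rw [ucp_dist_scale' _ _ hd]; nlinarith)

/-- `ucp_local` transported to a ball of centre `a` and radius `d ≤ 1`. Scaling down only decreases derivatives
and Laplacians, so the threshold `ε₁` does not depend on `a` and `d`. -/
theorem ucp_local_scaled (hN : 1 ≤ N) (hR : 0 < R) {p q C : ℝ} (hp : 0 < p) (hq : 0 < q) (hpq : 1 < p * q)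
    (hC : 0 < C) {u v : EuclideanSpace ℝ (Fin N) → ℝ} (hu : ContDiffOn ℝ 2 u (closedBall c R))
    (hv : ContDiffOn ℝ 2 v (closedBall c R))
    (hlap : ∀ y ∈ ball c R, |ucpLap u y| ≤ C * |v y| ^ q ∧ |ucpLap v y| ≤ C * |u y| ^ p) :
    ∃ ε₁ : ℝ, 0 < ε₁ ∧ ∀ (a : EuclideanSpace ℝ (Fin N)) (d : ℝ), 0 < d → d ≤ 1 →
      (∀ y ∈ sphere c R, dist y a < 2 * d → (u y = 0 ∧ fderivWithin ℝ u (closedBall c R) y = 0) ∧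
        (v y = 0 ∧ fderivWithin ℝ v (closedBall c R) y = 0)) →
      (∀ y ∈ closedBall c R, dist y a < d → u y = 0 ∧ v y = 0) →
      (∀ y ∈ closedBall c R, dist y a < 2 * d → |u y| ≤ ε₁ ∧ |v y| ≤ ε₁) →
      ∀ y ∈ closedBall c R, dist y a < 9 / 8 * d → u y = 0 ∧ v y = 0 := by
  obtain ⟨M, hM, hMu⟩ := ucp_exists_bound hR hu
  obtain ⟨M', hM', hMv⟩ := ucp_exists_bound hR hv
  have hmono : ∀ {a b : ℝ}, a ≤ b → ∀ {w : EuclideanSpace ℝ (Fin N) → ℝ},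
      (∀ y ∈ ball c R, |w y| ≤ a ∧ (∀ i, |ucpD (EuclideanSpace.single i 1) w y| ≤ a) ∧ |ucpLap w y| ≤ a) →
      ∀ y ∈ ball c R, |w y| ≤ b ∧ (∀ i, |ucpD (EuclideanSpace.single i 1) w y| ≤ b) ∧ |ucpLap w y| ≤ b :=
    fun hab _ h y hy => ⟨(h y hy).1.trans hab, fun i => ((h y hy).2.1 i).trans hab, (h y hy).2.2.trans hab⟩
  have hMM : 0 ≤ max M M' := le_max_of_le_left hM
  obtain ⟨ε₁, hε₁, hloc⟩ := ucp_local (N := N) hN hp hq hpq hC hMM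
  refine ⟨ε₁, hε₁, ?_⟩
  intro a d hd hd1 hs hvan hsmall y hy hya
  have hAu := ucp_adm_scale hR hMM hu (hmono (le_max_left M M') hMu) hd hd1
    (fun y hy h => (hs y hy h).1) (fun y hy h => (hvan y hy h).1)
  have hAv := ucp_adm_scale hR hMM hv (hmono (le_max_right M M') hMv) hd hd1
    (fun y hy h => (hs y hy h).2) (fun y hy h => (hvan y hy h).2)
  have hback : a + d • (d⁻¹ • (y - a)) = y := by
    rw [smul_inv_smul₀ hd.ne', add_sub_cancel]
  have := hloc (d⁻¹ • (c - a)) (R / d) (by positivity) _ _ hAu hAv ?_ ?_ (d⁻¹ • (y - a)) ?_ ?_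
  · simpa only [hback] using this
  · intro z hz _
    have hz' : a + d • z ∈ ball c R := by
      rw [mem_ball, lt_div_iff₀' hd] at hz
      rwa [mem_ball, ucp_dist_scale _ _ _ hd]
    have hd2 : d ^ 2 ≤ 1 := pow_le_one₀ hd.le hd1
    rw [ucpLap_scale, ucpLap_scale, abs_mul, abs_mul, abs_of_nonneg (sq_nonneg d)]
    exact ⟨(mul_le_of_le_one_left (abs_nonneg _) hd2).trans (hlap _ hz').1,
      (mul_le_of_le_one_left (abs_nonneg _) hd2).trans (hlap _ hz').2⟩
  · intro z hz hz2
    apply hsmall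
    · rw [mem_closedBall, le_div_iff₀' hd] at hz
      rwa [mem_closedBall, ucp_dist_scale _ _ _ hd]
    · rw [ucp_dist_scale' _ _ hd]; nlinarith
  · rw [mem_closedBall, le_div_iff₀' hd, ← ucp_dist_scale _ _ _ hd, hback]
    exact hy
  · have h := ucp_dist_scale' a (d⁻¹ • (y - a)) hd
    rw [hback] at h
    rw [h] at hya
    nlinarith

/-- If `u` and `v` vanish on the part of `closedBall c R` inside a ball and at a point `y₀` of its boundary sphere,
then they vanish near `y₀`, provided that they have zero Cauchy data on the part of `sphere c R` near `y₀`.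
Smallness, needed for `ucp_local_scaled`, comes from continuity at `y₀` after passing to a small ball tangent
at `y₀`. -/
theorem ucp_touch (hN : 1 ≤ N) (hR : 0 < R) {p q C : ℝ} (hp : 0 < p) (hq : 0 < q) (hpq : 1 < p * q)
    (hC : 0 < C) {u v : EuclideanSpace ℝ (Fin N) → ℝ} (hu : ContDiffOn ℝ 2 u (closedBall c R))
    (hv : ContDiffOn ℝ 2 v (closedBall c R))
    (hlap : ∀ y ∈ ball c R, |ucpLap u y| ≤ C * |v y| ^ q ∧ |ucpLap v y| ≤ C * |u y| ^ p)
    {O : Set (EuclideanSpace ℝ (Fin N))} (hO : IsOpen O)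
    (hs : ∀ y ∈ sphere c R, y ∈ O → (u y = 0 ∧ fderivWithin ℝ u (closedBall c R) y = 0) ∧
        (v y = 0 ∧ fderivWithin ℝ v (closedBall c R) y = 0))
    {a y₀ : EuclideanSpace ℝ (Fin N)} {ρ : ℝ} (hρ : 0 < ρ) (hy₀ : y₀ ∈ O) (hy₀c : y₀ ∈ closedBall c R)
    (hya : dist y₀ a = ρ) (h0 : u y₀ = 0 ∧ v y₀ = 0)
    (hvan : ∀ y ∈ closedBall c R, dist y a < ρ → u y = 0 ∧ v y = 0) :
    ∀ᶠ y in 𝓝 y₀, y ∈ closedBall c R → u y = 0 ∧ v y = 0 := by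
  obtain ⟨ε₁, hε₁, hloc⟩ := ucp_local_scaled hN hR hp hq hpq hC hu hv hlap
  have hcont : ∀ {w : EuclideanSpace ℝ (Fin N) → ℝ}, ContDiffOn ℝ 2 w (closedBall c R) → w y₀ = 0 →
      ∀ᶠ y in 𝓝 y₀, y ∈ closedBall c R → |w y| ≤ ε₁ := by
    intro w hw hw0
    have h1 : Tendsto (fun y => |w y|) (𝓝[closedBall c R] y₀) (𝓝 |w y₀|) :=
      (hw.continuousOn y₀ hy₀c).abs
    rw [hw0, abs_zero] at h1
    exact eventually_nhdsWithin_iff.1 (h1.eventually_le_const hε₁)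
  obtain ⟨t, ht, hball⟩ := Metric.eventually_nhds_iff.1
    ((hO.eventually_mem hy₀).and ((hcont hu h0.1).and (hcont hv h0.2)))
  set d := min 1 (min ρ (t / 3)) with hd
  have hd0 : 0 < d := lt_min one_pos (lt_min hρ (by positivity))
  have hd1 : d ≤ 1 := min_le_left _ _
  have hdρ : d ≤ ρ := (min_le_right _ _).trans (min_le_left _ _)
  have hdt : d ≤ t / 3 := (min_le_right _ _).trans (min_le_right _ _)
  have hna : ‖a - y₀‖ = ρ := by rw [← dist_eq_norm, dist_comm]; exact hya
  -- centre of the ball of radius `d` internally tangent at `y₀` to the ball of radius `ρ` around `a`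
  set b := y₀ + (d / ρ) • (a - y₀) with hb
  have hby : dist y₀ b = d := by
    rw [hb, dist_eq_norm, sub_add_cancel_left, norm_neg, norm_smul, hna, Real.norm_eq_abs,
      abs_of_nonneg (by positivity)]
    field_simp
  have hba : dist b a = ρ - d := by
    have : b - a = -((1 - d / ρ) • (a - y₀)) := by
      rw [hb, sub_smul, one_smul]; abel
    have h1 : 0 ≤ 1 - d / ρ := by rw [sub_nonneg, div_le_one hρ]; exact hdρ
    rw [dist_eq_norm, this, norm_neg, norm_smul, hna, Real.norm_eq_abs, abs_of_nonneg h1]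
    field_simp
  have hnear : ∀ y, dist y b < 2 * d → dist y y₀ < t := by
    intro y hy
    have := dist_triangle y b y₀
    rw [dist_comm b y₀, hby] at this
    linarith
  have key := hloc b d hd0 hd1 (fun y hy h => hs y hy (hball (hnear y h)).1)
    (fun y hy h => hvan y hy (by have := dist_triangle y b a; linarith))
    (fun y hy h => ⟨(hball (hnear y h)).2.1 hy, (hball (hnear y h)).2.2 hy⟩)
  have hmem : ball b (9 / 8 * d) ∈ 𝓝 y₀ := isOpen_ball.mem_nhds (by rw [mem_ball, hby]; linarith)
  filter_upwards [hmem] with y hy hyc using key y hyc hy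

end scaling

theorem ucp_boundary {N : ℕ} (hN : 2 ≤ N) (c : EuclideanSpace ℝ (Fin N)) {R : ℝ} (hR : 0 < R)
    {Γ : Set (EuclideanSpace ℝ (Fin N))} (hΓne : Γ.Nonempty)
    (hΓopen : ∃ U : Set (EuclideanSpace ℝ (Fin N)), IsOpen U ∧ Γ = U ∩ sphere c R)
    {p q : ℝ} (hp : 0 < p) (hq : 0 < q) (hpq : 1 < p * q)
    {u v : EuclideanSpace ℝ (Fin N) → ℝ}
    (hu : ContDiffOn ℝ 2 u (closedBall c R)) (hv : ContDiffOn ℝ 2 v (closedBall c R))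
    {C : ℝ} (hC : 0 < C)
    (hbound : ∀ x ∈ closedBall c R,
      |laplacianWithin u (closedBall c R) x| ≤ C * |v x| ^ q ∧
      |laplacianWithin v (closedBall c R) x| ≤ C * |u x| ^ p)
    (huΓ : ∀ x ∈ Γ, u x = 0) (hvΓ : ∀ x ∈ Γ, v x = 0)
    (hDu : ∀ x ∈ Γ, fderivWithin ℝ u (closedBall c R) x = 0)
    (hDv : ∀ x ∈ Γ, fderivWithin ℝ v (closedBall c R) x = 0) :
    ∀ x ∈ closedBall c R, u x = 0 ∧ v x = 0 := by
  obtain ⟨U, hU, hΓU⟩ := hΓopen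
  obtain ⟨x₀, hx₀⟩ := hΓne
  have hx₀' : x₀ ∈ U ∩ sphere c R := hΓU ▸ hx₀
  have hN1 : 1 ≤ N := by omega
  have hlap : ∀ y ∈ ball c R, |ucpLap u y| ≤ C * |v y| ^ q ∧ |ucpLap v y| ≤ C * |u y| ^ p := by
    intro y hy
    rw [← ucp_laplacianWithin_eq hu hy, ← ucp_laplacianWithin_eq hv hy]
    exact hbound y (ball_subset_closedBall hy)
  set Z : Set (EuclideanSpace ℝ (Fin N)) :=
    {x | ∀ᶠ y in 𝓝 x, y ∈ closedBall c R → u y = 0 ∧ v y = 0} with hZ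
  have hZo : IsOpen Z := isOpen_setOfPred_eventually_nhds
  -- the exterior ball tangent to the sphere at `x₀` does not meet the closed ball
  have hx₀Z : x₀ ∈ Z := by
    have hxc : dist x₀ c = R := hx₀'.2
    refine ucp_touch hN1 hR hp hq hpq hC hu hv hlap hU ?_ (a := x₀ + (x₀ - c)) hR hx₀'.1
      (sphere_subset_closedBall hx₀'.2) ?_ ⟨huΓ _ hx₀, hvΓ _ hx₀⟩ ?_
    · intro y hy hyU
      have hyΓ : y ∈ Γ := hΓU ▸ ⟨hyU, hy⟩
      exact ⟨⟨huΓ y hyΓ, hDu y hyΓ⟩, ⟨hvΓ y hyΓ, hDv y hyΓ⟩⟩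
    · rw [dist_eq_norm, sub_add_cancel_left, norm_neg, ← dist_eq_norm]; exact hxc
    · intro y hy hya
      exfalso
      have h1 : dist c (x₀ + (x₀ - c)) = 2 * R := by
        rw [dist_comm, dist_eq_norm, show x₀ + (x₀ - c) - c = (2 : ℝ) • (x₀ - c) by rw [two_smul]; abel,
          norm_smul, ← dist_eq_norm, hxc]
        norm_num
      have h2 := dist_triangle c y (x₀ + (x₀ - c))
      rw [mem_closedBall, dist_comm] at hy
      linarith
  have hne : (ball c R ∩ Z).Nonempty := by
    have : x₀ ∈ closure (ball c R) := by
      rw [closure_ball c hR.ne']; exact sphere_subset_closedBall hx₀'.2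
    rw [inter_comm]
    exact mem_closure_iff.1 this Z hZo hx₀Z
  have hsub : ball c R ⊆ Z := by
    refine (convex_ball c R).isPreconnected.subset_of_closure_inter_subset hZo hne ?_
    rintro x ⟨hxZ, hxB⟩
    by_contra hxn
    -- the largest ball in `Z` around a point `z` of `Z` near `x` touches the complement of `Z` inside the ball
    obtain ⟨z, hzZ, hzx⟩ := Metric.mem_closure_iff.1 hxZ ((R - dist x c) / 2)
      (by rw [mem_ball] at hxB; linarith)
    obtain ⟨y₀, hy₀, hdist⟩ := hZo.isClosed_compl.exists_infDist_eq_dist ⟨x, hxn⟩ z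
    have hle : ∀ y ∈ Zᶜ, dist z y₀ ≤ dist z y := fun y hy => hdist ▸ infDist_le_dist_of_mem hy
    have hρ : 0 < dist z y₀ := dist_pos.2 fun h => hy₀ (h ▸ hzZ)
    have hin : ∀ y, dist y z < dist z y₀ → y ∈ Z := by
      intro y hy
      by_contra hyn
      have := hle y hyn
      rw [dist_comm] at hy
      linarith
    have hy₀B : y₀ ∈ ball c R := by
      have h1 := hle x hxn
      have h2 := dist_triangle y₀ z c
      have h3 := dist_triangle z x c
      rw [dist_comm x z] at hzx
      rw [dist_comm y₀ z] at h2
      rw [mem_ball]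
      linarith
    have hvan : ∀ y ∈ closedBall c R, dist y z < dist z y₀ → u y = 0 ∧ v y = 0 := fun y hy h =>
      (show ∀ᶠ y' in 𝓝 y, y' ∈ closedBall c R → u y' = 0 ∧ v y' = 0 from hin y h).self_of_nhds hy
    have hcl : y₀ ∈ closure (ball z (dist z y₀)) := by
      rw [closure_ball z hρ.ne', mem_closedBall, dist_comm]
    have hfreq := mem_closure_iff_frequently.1 hcl
    have hzero : ∀ {w : EuclideanSpace ℝ (Fin N) → ℝ}, ContDiffOn ℝ 2 w (closedBall c R) →
        (∀ y ∈ closedBall c R, dist y z < dist z y₀ → w y = 0) → w y₀ = 0 := by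
      intro w hw h0
      by_contra hne
      have hca : ContinuousAt w y₀ := hw.continuousOn.continuousAt (ucp_closedBall_mem_nhds hy₀B)
      obtain ⟨y, hy1, hy2, hy3⟩ := (hfreq.and_eventually
        ((hca.eventually_ne hne).and (ucp_closedBall_mem_nhds hy₀B))).exists
      exact hy2 (h0 y hy3 hy1)
    refine hy₀ (ucp_touch hN1 hR hp hq hpq hC hu hv hlap isOpen_ball (O := ball c R) ?_ (a := z) hρ hy₀B
      (ball_subset_closedBall hy₀B) (dist_comm _ _) ⟨hzero hu fun y hy h => (hvan y hy h).1,
        hzero hv fun y hy h => (hvan y hy h).2⟩ hvan)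
    intro y hy hyb
    rw [mem_sphere] at hy
    rw [mem_ball] at hyb
    exact absurd hyb (by rw [hy]; exact lt_irrefl R)
  have hball : ∀ y ∈ ball c R, u y = 0 ∧ v y = 0 := fun y hy =>
    (show ∀ᶠ y' in 𝓝 y, y' ∈ closedBall c R → u y' = 0 ∧ v y' = 0 from hsub hy).self_of_nhds
      (ball_subset_closedBall hy)
  have hfin : ∀ {w : EuclideanSpace ℝ (Fin N) → ℝ}, ContDiffOn ℝ 2 w (closedBall c R) →
      (∀ y ∈ ball c R, w y = 0) → ∀ y ∈ closedBall c R, w y = 0 := by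
    intro w hw h0
    have h1 : EqOn w (fun _ => 0) (ball c R) := h0
    exact h1.of_subset_closure hw.continuousOn continuousOn_const ball_subset_closedBall
      (closure_ball c hR.ne').ge
  intro x hx
  exact ⟨hfin hu (fun y hy => (hball y hy).1) x hx, hfin hv (fun y hy => (hball y hy).2) x hx⟩
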